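/- There is no algorithm (computable function on codes of 3CMs) that, given a 3CM M, decides whether the rule set R_M is bts; i.e., bts membership is undecidable within the concrete class C = {R_M : M a 3CM}. -/

import Mathlib

set_option maxHeartbeats 1000000
set_option synthInstance.maxHeartbeats 1000000
set_option synthInstance.maxSize 512

attribute [local instance] Classical.propDecidable

noncomputable section

/-! ### Terms and atoms -/

/-- Variables: ordinary variables `Sum.inl n`, or fresh variables `Sum.inr (c, k)`
introduced by the trigger with code `c` for the head variable with code `k`. -/
abbrev Var : Type := ℕ ⊕ (ℕ × ℕ)

/-- Terms: constants `Sum.inl c` or variables `Sum.inr v`. -/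
abbrev FTerm : Type := ℕ ⊕ Var

def ct (n : ℕ) : FTerm := Sum.inl n
def vt (n : ℕ) : FTerm := Sum.inr (Sum.inl n)

/-- An atom: a predicate name together with its list of arguments. -/
abbrev Atom : Type := ℕ × List FTerm

/-- Active domain: all terms occurring in an atom set. -/
def adom (J : Set Atom) : Set FTerm := {t | ∃ a ∈ J, t ∈ a.2}

def atomVarsF (a : Atom) : Finset Var := (a.2.filterMap Sum.getRight?).toFinset

def varsF (A : Finset Atom) : Finset Var := A.biUnion atomVarsF

def setVars (J : Set Atom) : Set Var := {v | ∃ a ∈ J, Sum.inr v ∈ a.2}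

/-! ### Substitutions and homomorphisms -/

abbrev Subst := Var → FTerm

def applyT (σ : Subst) : FTerm → FTerm
  | Sum.inl c => Sum.inl c
  | Sum.inr v => σ v

def applyA (σ : Subst) (a : Atom) : Atom := (a.1, a.2.map (applyT σ))

def IsHomOn (σ : Subst) (A B : Set Atom) : Prop := ∀ a ∈ A, applyA σ a ∈ B

def HomBetween (A B : Set Atom) : Prop := ∃ σ : Subst, IsHomOn σ A B

def IsRetraction (σ : Subst) (A B : Set Atom) : Prop :=
  IsHomOn σ A B ∧ ∀ v ∈ setVars A ∩ setVars B, σ v = Sum.inr v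

/-- Isomorphism of atom sets: a pair of mutually inverse homomorphisms. -/
def Isomorphic (A B : Set Atom) : Prop :=
  ∃ σ τ : Subst, IsHomOn σ A B ∧ IsHomOn τ B A ∧
    (∀ a ∈ A, applyA τ (applyA σ a) = a) ∧ (∀ b ∈ B, applyA σ (applyA τ b) = b)

/-! ### Rules -/

/-- A rule is a pair (body, head). Its existential variables are the head variables
not occurring in the body; its frontier the variables shared by body and head.
A rule is Datalog when every head variable occurs in the body. -/
abbrev Rule : Type := Finset Atom × Finset Atom

def frontierOf (R : Rule) : Finset Var := varsF R.1 ∩ varsF R.2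

def DatRules (Rset : Finset Rule) : Finset Rule := Rset.filter fun R => varsF R.2 ⊆ varsF R.1
def NDatRules (Rset : Finset Rule) : Finset Rule := Rset.filter fun R => ¬ varsF R.2 ⊆ varsF R.1

/-- Satisfaction of a rule in an atom set. -/
def SatisfiesRule (J : Set Atom) (R : Rule) : Prop :=
  ∀ σ : Subst, IsHomOn σ (R.1 : Set Atom) J →
    ∃ σ' : Subst, (∀ v ∈ varsF R.1, σ' v = σ v) ∧ IsHomOn σ' (R.2 : Set Atom) J

def IsModel (Rset : Finset Rule) (I J : Set Atom) : Prop :=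
  (∀ R ∈ Rset, SatisfiesRule J R) ∧ HomBetween I J

/-- BCQ entailment: every model of the KB satisfies the query. -/
def Entails (Rset : Finset Rule) (I q : Set Atom) : Prop :=
  ∀ J : Set Atom, IsModel Rset I J → HomBetween q J

def IsUniversalModel (Rset : Finset Rule) (I U : Set Atom) : Prop :=
  IsModel Rset I U ∧ ∀ J : Set Atom, IsModel Rset I J → HomBetween U J

/-! ### Triggers -/

structure Trigger where
  rule : Rule
  sub : Subst

/-- Injective code of a trigger (a trigger is determined by its rule and the
restriction of its substitution to the body variables). -/
def Trigger.code (t : Trigger) : ℕ :=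
  Encodable.encode (t.rule, (varsF t.rule.1).image fun v => (v, t.sub v))

/-- The canonical extension of the trigger substitution, mapping each existential
variable `z` to the fresh variable unique for `z` and the trigger. -/
def Trigger.extSub (t : Trigger) : Subst := fun v =>
  if v ∈ varsF t.rule.1 then t.sub v
  else Sum.inr (Sum.inr (t.code, Encodable.encode v))

def Trigger.out (t : Trigger) : Finset Atom := t.rule.2.image (applyA t.extSub)

def Trigger.isOn (t : Trigger) (J : Set Atom) : Prop := IsHomOn t.sub (t.rule.1 : Set Atom) J

/-! ### Chase variants, derivations, chase termination classes -/

inductive ChaseVariant : Type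
  | O | SO | R | E
deriving DecidableEq

def Applicable : ChaseVariant → Trigger → Set Atom → Prop
  | .O, t, J => ¬ ((t.out : Set Atom) ⊆ J)
  | .SO, t, J => ∀ t' : Trigger, t'.rule = t.rule → t'.isOn J →
      (∀ v ∈ frontierOf t.rule, t'.sub v = t.sub v) → ¬ ((t'.out : Set Atom) ⊆ J)
  | .R, t, J => ¬ ∃ σ : Subst, IsRetraction σ (J ∪ (t.out : Set Atom)) J
  | .E, t, J => ¬ ∃ σ : Subst, IsHomOn σ (J ∪ (t.out : Set Atom)) J

def instSeq (I : Set Atom) (steps : ℕ → Option Trigger) : ℕ → Set Atom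
  | 0 => I
  | n + 1 => instSeq I steps n ∪
      (match steps n with
        | none => (∅ : Set Atom)
        | some t => (t.out : Set Atom))

/-- A (possibly infinite) derivation from the knowledge base `⟨Rset, I⟩`. -/
structure Deriv (Rset : Finset Rule) (I : Set Atom) where
  steps : ℕ → Option Trigger
  prefix_closed : ∀ n, steps n = none → steps (n + 1) = none
  valid : ∀ n t, steps n = some t →
    t.rule ∈ Rset ∧ t.isOn (instSeq I steps n) ∧ ¬ ((t.out : Set Atom) ⊆ instSeq I steps n)

def Deriv.inst {Rset : Finset Rule} {I : Set Atom} (D : Deriv Rset I) (n : ℕ) :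
    Set Atom := instSeq I D.steps n

def Deriv.res {Rset : Finset Rule} {I : Set Atom} (D : Deriv Rset I) : Set Atom :=
  ⋃ n, D.inst n

def Deriv.Finite {Rset : Finset Rule} {I : Set Atom} (D : Deriv Rset I) : Prop :=
  ∃ n, D.steps n = none

def Deriv.IsX {Rset : Finset Rule} {I : Set Atom} (X : ChaseVariant)
    (D : Deriv Rset I) : Prop :=
  ∀ n t, D.steps n = some t → Applicable X t (D.inst n)

def Deriv.Fair {Rset : Finset Rule} {I : Set Atom} (X : ChaseVariant)
    (D : Deriv Rset I) : Prop :=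
  ∀ i, ∀ t : Trigger, t.rule ∈ Rset → t.isOn (D.inst i) → Applicable X t (D.inst i) →
    ∃ j, i < j ∧ ¬ Applicable X t (D.inst j)

/-- All-instance, all-derivation chase termination. -/
def CTall (X : ChaseVariant) (Rset : Finset Rule) : Prop :=
  ∀ I : Finset Atom, ∀ D : Deriv Rset (I : Set Atom), D.IsX X → D.Fair X → D.Finite

/-- All-instance, some-derivation chase termination. -/
def CTex (X : ChaseVariant) (Rset : Finset Rule) : Prop :=
  ∀ I : Finset Atom, ∃ D : Deriv Rset (I : Set Atom), D.IsX X ∧ D.Fair X ∧ D.Finite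

inductive CTQuant : Type
  | all | ex

def CT (X : ChaseVariant) : CTQuant → Finset Rule → Prop
  | .all => CTall X
  | .ex => CTex X

/-- The result of some fair `X`-derivation from `⟨Rset, J⟩`. -/
def ChX (X : ChaseVariant) (Rset : Finset Rule) (J : Set Atom) : Set Atom :=
  if h : ∃ D : Deriv Rset J, D.IsX X ∧ D.Fair X then h.choose.res else J

/-! ### Gaifman graph, treewidth, bts -/

def gaifmanAdj (J : Set Atom) (u v : FTerm) : Prop :=
  u ≠ v ∧ ∃ a ∈ J, u ∈ a.2 ∧ v ∈ a.2

/-- The (Gaifman graph of the) atom set `J` has treewidth at most `k`: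
there is a tree decomposition all of whose bags have size at most `k + 1`. -/
def TreewidthAtMost (J : Set Atom) (k : ℕ) : Prop :=
  ∃ (ι : Type) (T : SimpleGraph ι) (bag : ι → Finset FTerm),
    T.Connected ∧ T.IsAcyclic ∧
    (∀ v ∈ adom J, ∃ i, v ∈ bag i) ∧
    (∀ u v : FTerm, gaifmanAdj J u v → ∃ i, u ∈ bag i ∧ v ∈ bag i) ∧
    (∀ v : FTerm, (SimpleGraph.induce {i | v ∈ bag i} T).Preconnected) ∧
    (∀ i, (bag i).card ≤ k + 1)

/-- Bounded-treewidth sets: for every instance, some universal model of bounded treewidth. -/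
def IsBts (Rset : Finset Rule) : Prop :=
  ∀ I : Finset Atom, ∃ (k : ℕ) (U : Set Atom),
    IsUniversalModel Rset (I : Set Atom) U ∧ TreewidthAtMost U k

/-! ### Three-counter machines -/

/-- A three-counter machine: states `0, …, m − 1` (state `0` is initial, standing for `q₁`),
and a partial transition function given by a finite table. -/
structure TCM where
  m : ℕ
  hm : 0 < m
  δ : List ((ℕ × Bool × Bool) × (ℕ × Int × Int))
  keys_nodup : (δ.map Prod.fst).Nodup
  wf : ∀ e ∈ δ, e.1.1 < m ∧ e.2.1 < m ∧ e.2.2.1.natAbs ≤ 1 ∧ e.2.2.2.natAbs ≤ 1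

/-- A configuration: state, two counters, and the time counter. -/
abbrev Config : Type := ℕ × ℕ × ℕ × ℕ

def TCM.step (M : TCM) (q : ℕ) (b1 b2 : Bool) : Option (ℕ × Int × Int) :=
  (M.δ.find? fun e => decide (e.1 = (q, b1, b2))).map Prod.snd

def TCM.next (M : TCM) (C : Config) : Option Config :=
  match M.step C.1 (decide (C.2.1 ≠ 0)) (decide (C.2.2.1 ≠ 0)) with
  | none => none
  | some (q', d1, d2) =>
      some (q', ((C.2.1 : ℤ) + d1).toNat, ((C.2.2.1 : ℤ) + d2).toNat, C.2.2.2 + 1)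

def TCM.run (M : TCM) : ℕ → Option Config
  | 0 => some (0, 0, 0, 0)
  | n + 1 => (M.run n).bind M.next

/-- The machine halts: some reachable configuration has no successor. -/
def TCM.Halts (M : TCM) : Prop := ∃ n C, M.run n = some C ∧ M.next C = none

/-! ### Prime encoding of configurations -/

/-- The least prime strictly greater than `n` (computably). -/
def nextPrime (n : ℕ) : ℕ := Nat.find (Nat.exists_infinite_primes (n + 1))

/-- `prm i` is the `(i+1)`-st prime `p_{i+1}`, i.e. `prm 0 = 2`. -/
def prm : ℕ → ℕ
  | 0 => 2
  | k + 1 => nextPrime (prm k)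

/-- Encoding of a configuration as a natural number. -/
def TCM.enc (M : TCM) (C : Config) : ℕ :=
  prm C.1 * prm M.m ^ C.2.1 * prm (M.m + 1) ^ C.2.2.1 * prm (M.m + 2) ^ C.2.2.2

/-- `p = p₁ ⋯ p_{m+3}`. -/
def TCM.p (M : TCM) : ℕ := ∏ i ∈ Finset.range (M.m + 3), prm i

/-- Decode the state from a residue modulo `M.p`. -/
def TCM.stateOf (M : TCM) (i : ℕ) : Option ℕ :=
  (List.range M.m).find? fun s => decide (prm s ∣ i)

/-- The canonical pair `(q_i, r_i)` realizing the prime encoding of the transitions. -/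
def TCM.qr (M : TCM) (i : ℕ) : ℕ × ℕ :=
  match M.stateOf i with
  | none => (1, 1)
  | some s =>
      let b1 : Bool := decide (prm M.m ∣ i)
      let b2 : Bool := decide (prm (M.m + 1) ∣ i)
      match M.step s b1 b2 with
      | none => (1, 1)
      | some (s', d1, d2) =>
          let e1 : ℤ := if b1 then d1 else max d1 0
          let e2 : ℤ := if b2 then d2 else max d2 0
          let num : ℕ := prm s' * prm (M.m + 2) *
            (if e1 = 1 then prm M.m else 1) * (if e2 = 1 then prm (M.m + 1) else 1)
          let den : ℕ := prm s *
            (if e1 = -1 then prm M.m else 1) * (if e2 = -1 then prm (M.m + 1) else 1)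
          (num / Nat.gcd num den, den / Nat.gcd num den)

def TCM.qi (M : TCM) (i : ℕ) : ℕ := (M.qr i).1
def TCM.ri (M : TCM) (i : ℕ) : ℕ := (M.qr i).2

/-- `g(n) = q_{n mod p} · n / r_{n mod p}`. -/
def TCM.g (M : TCM) (n : ℕ) : ℕ := M.qi (n % M.p) * n / M.ri (n % M.p)

/-- `gᵏ(2)`. -/
def TCM.gIter (M : TCM) (k : ℕ) : ℕ := (M.g)^[k] 2

/-- `G = {gᵏ(2) : k ∈ ℕ}`. -/
def TCM.Gset (M : TCM) : Set ℕ := Set.range M.gIter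

/-! ### The rule set `R_M` -/

def pEnd : ℕ := 0
def pFlood : ℕ := 1
def pS0 : ℕ := 2
def pS : ℕ := 3
def pG : ℕ := 4
def pR (i : ℕ) : ℕ := 5 + 2 * i
def pT (i : ℕ) : ℕ := 6 + 2 * i

/-- `j`-th vertex of an `S`-path of length `n` from variable `a` to variable `b`
with fresh intermediate variables `base + 1, …, base + n − 1`. -/
def pathVar (a b base n j : ℕ) : FTerm :=
  if j = 0 then vt a else if j = n then vt b else vt (base + j)

/-- The atoms of `Sⁿ(x_a, x_b)`: an `S`-path of length `n`. -/
def spath (a b base n : ℕ) : Finset Atom :=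
  (Finset.range n).image fun j =>
    (pS, [pathVar a b base n j, pathVar a b base n (j + 1)])

/-- Rule (1): `S₀(x,y) → S(x,y)`. -/
def ruleS : Rule := ({(pS0, [vt 0, vt 1])}, {(pS, [vt 0, vt 1])})

/-- Rule (2): `R_i(x,y) ∧ S(y,z) → R_{i+1}(x,z)` (indices modulo `p`). -/
def ruleR (M : TCM) (i : ℕ) : Rule :=
  ({(pR i, [vt 0, vt 1]), (pS, [vt 1, vt 2])}, {(pR ((i + 1) % M.p), [vt 0, vt 2])})

/-- Rule (3): `T_i(x,y,z) ∧ S^{r_i}(y,y′) ∧ S^{q_i}(z,z′) → T_i(x,y′,z′)`. -/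
def ruleT (M : TCM) (i : ℕ) : Rule :=
  (({(pT i, [vt 0, vt 1, vt 2])} : Finset Atom) ∪ spath 1 3 10 (M.ri i) ∪
      spath 2 4 (11 + M.ri i) (M.qi i),
    {(pT i, [vt 0, vt 3, vt 4])})

/-- Rule (4): `S(x,y) → Flood(y)`. -/
def ruleFloodProp : Rule := ({(pS, [vt 0, vt 1])}, {(pFlood, [vt 1])})

/-- Rule (5): `End(x) → S(x,x)`. -/
def ruleSEnd : Rule := ({(pEnd, [vt 0])}, {(pS, [vt 0, vt 0])})

/-- Rule (6): `S²(x,y) → G(x,y)`. -/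
def ruleGInit : Rule := (spath 0 1 10 2, {(pG, [vt 0, vt 1])})

/-- Rule (7): `G(x,y) ∧ R_i(x,y) ∧ T_i(x,y,z) → G(x,z)`. -/
def ruleGStep (i : ℕ) : Rule :=
  ({(pG, [vt 0, vt 1]), (pR i, [vt 0, vt 1]), (pT i, [vt 0, vt 1, vt 2])},
    {(pG, [vt 0, vt 2])})

/-- Rule (8): `Flood(x) ∧ Flood(y) ∧ Flood(z) → G(x,y) ∧ ⋀_{j<p} (R_j(x,y) ∧ T_j(x,y,z))`. -/
def ruleFloodGen (M : TCM) : Rule :=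
  ({(pFlood, [vt 0]), (pFlood, [vt 1]), (pFlood, [vt 2])},
    ({(pG, [vt 0, vt 1])} : Finset Atom) ∪
      (Finset.range M.p).biUnion fun j =>
        {(pR j, [vt 0, vt 1]), (pT j, [vt 0, vt 1, vt 2])})

/-- Rule (9): `G(y,z) ∧ End(z) → ∃x (S₀(x,y) ∧ R₀(x,x) ∧ ⋀_{j<p} T_j(x,x,x))`. -/
def ruleEx (M : TCM) : Rule :=
  ({(pG, [vt 1, vt 2]), (pEnd, [vt 2])},
    ({(pS0, [vt 0, vt 1]), (pR 0, [vt 0, vt 0])} : Finset Atom) ∪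
      (Finset.range M.p).biUnion fun j => {(pT j, [vt 0, vt 0, vt 0])})

/-- The rule set `R_M`. -/
def RM (M : TCM) : Finset Rule :=
  ({ruleS, ruleFloodProp, ruleSEnd, ruleGInit, ruleFloodGen M, ruleEx M} : Finset Rule) ∪
    (Finset.range M.p).biUnion fun i => {ruleR M i, ruleT M i, ruleGStep i}

/-- The alternating Datalog/non-Datalog chase steps `Step^X_n`. -/
def StepX (X : ChaseVariant) (M : TCM) : ℕ → Set Atom → Set Atom
  | 0, I => ChX X (DatRules (RM M)) I
  | n + 1, I => ChX X (DatRules (RM M)) (ChX X (NDatRules (RM M)) (StepX X M n I))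

/-- The constant `w`, the "well of positivity". -/
def wC : FTerm := ct 0

/-- The instance `{End(w)}`. -/
def IE : Set Atom := {(pEnd, [wC])}

/-- Membership in the signature of `R_M` (predicate together with its arity). -/
def InSig (M : TCM) (a : Atom) : Prop :=
  ((a.1 = pEnd ∨ a.1 = pFlood) ∧ a.2.length = 1) ∨
  ((a.1 = pS0 ∨ a.1 = pS ∨ a.1 = pG ∨ ∃ i < M.p, a.1 = pR i) ∧ a.2.length = 2) ∨
  ((∃ i < M.p, a.1 = pT i) ∧ a.2.length = 3)

/-- The critical instance: all atoms `P(w, …, w)` over the signature of `R_M`. -/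
def Crit (M : TCM) : Set Atom := {a | InSig M a ∧ ∀ t ∈ a.2, t = wC}

/-- An `S`-path of length `k` from `s` to `t` in `J`. -/
def SPath (J : Set Atom) : ℕ → FTerm → FTerm → Prop
  | 0, s, t => s = t
  | k + 1, s, t => ∃ u, (pS, [s, u]) ∈ J ∧ SPath J k u t

/-- The restriction `J|_S`: atoms of `J` all of whose terms belong to `S`. -/
def restrictTo (J : Set Atom) (S : Set FTerm) : Set Atom := {a ∈ J | ∀ t ∈ a.2, t ∈ S}

/-- An explicit injective encoding of three-counter machines by natural numbers. -/
def encodeTCM (M : TCM) : ℕ := Encodable.encode (M.m, M.δ)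

/-!
The rule set `R_M` is bts iff `M` halts, and the halting problem for `M` is undecidable.

The rules simulate `M` along a descending chain of nulls ending in a term of `End`: rule (7) moves a
`G`-edge that starts in the top null from distance `n` to distance `g n`, where `g` acts on prime
encodings as a step of `M` does, starting from the encoding `2` of the initial configuration. Rule
(9) puts a new null on top of a null `x` once a `G`-edge leads from `x` to the end of its chain, and
rule (8) turns everything below the top into a clique.

* If `M` does not halt, its time counter makes the iterates of `g` at `2` grow beyond every chain,
  so the chain above `w` in a universal model of `{End(w)}` is infinite. It is a clique, and a
  homomorphism to a model in which `S₀` is the successor relation shows its nulls distinct. By the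
  Helly property of subtrees, bounded treewidth would make the clique finite.
* If `M` halts, the iterates of `g` at `2` are bounded by some `K`. A null of level `K` then never
  gets a `G`-edge to the end of its chain, so the Skolem chase only uses levels up to `K`. It is a
  finite universal model.

For halting, every primitive recursive function is computed by a loop program, and a loop program
runs on two counters via Gödel numbers `∏ r, prm r ^ s r`, whose multiplication and division by `k`
take `O(k)` states. A search loop over `t` thus gives, computably in `c`, a machine that halts iff
some run of bounded length of the `c`-th partial recursive function halts.
-/

/-! ### Subtrees of a tree and cliques of bounded treewidth -/

section Subtrees

variable {ι : Type*} {T : SimpleGraph ι} {S : Set ι}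

lemma exists_isPath_support_subset (hS : (T.induce S).Preconnected) {a b : ι} (ha : a ∈ S)
    (hb : b ∈ S) : ∃ q : T.Walk a b, q.IsPath ∧ ∀ x ∈ q.support, x ∈ S := by
  obtain ⟨w⟩ := hS ⟨a, ha⟩ ⟨b, hb⟩
  let w' : T.Walk a b := w.map (SimpleGraph.Embedding.induce S).toHom
  refine ⟨w'.bypass, w'.bypass_isPath, fun x hx => ?_⟩
  obtain ⟨y, -, rfl⟩ : ∃ y ∈ w.support, (SimpleGraph.Embedding.induce S).toHom y = x := by
    rw [← List.mem_map, ← SimpleGraph.Walk.support_map]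
    exact w'.support_bypass_subset_support hx
  exact y.2

lemma exists_walk_to_first_mem {r s : ι} (w : T.Walk r s) (hs : s ∈ S) :
    ∃ t ∈ S, ∃ a : T.Walk r t, ∀ x ∈ a.support, x ∈ S → x = t := by
  induction w with
  | nil => exact ⟨_, hs, .nil, by simp⟩
  | @cons u v _ h _ ih =>
    by_cases hu : u ∈ S
    · exact ⟨u, hu, .nil, by simp⟩
    · obtain ⟨t, ht, a, ha⟩ := ih hs
      refine ⟨t, ht, .cons h a, fun x hx hxS => ?_⟩
      rcases List.mem_cons.1 (a.support_cons h ▸ hx) with rfl | hx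
      · exact absurd hxS hu
      · exact ha x hx hxS

lemma isPath_append_of_first_mem {r t j : ι} {a : T.Walk r t} {q : T.Walk t j} (ha : a.IsPath)
    (hq : q.IsPath) (hfirst : ∀ x ∈ a.support, x ∈ S → x = t) (hqS : ∀ x ∈ q.support, x ∈ S) :
    (a.append q).IsPath := by
  have hqn : (t :: q.support.tail).Nodup := q.cons_tail_support ▸ hq.support_nodup
  rw [SimpleGraph.Walk.isPath_def, SimpleGraph.Walk.support_append, List.nodup_append']
  refine ⟨ha.support_nodup, hqn.of_cons, fun x hxa hxq => (List.nodup_cons.1 hqn).1 ?_⟩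
  exact hfirst x hxa (hqS x (List.mem_of_mem_tail hxq)) ▸ hxq

/-- Every subtree has a vertex (its gate) through which all paths from a root `r` enter it.
The gate farthest from `r` lies in every subtree of the family. -/
lemma exists_mem_of_pairwise_inter_subtrees (hT : T.IsAcyclic) {κ : Type*} {A : Finset κ}
    (hA : A.Nonempty) {S : κ → Set ι} (hS : ∀ v ∈ A, (T.induce (S v)).Preconnected)
    (hpair : ∀ v ∈ A, ∀ w ∈ A, (S v ∩ S w).Nonempty) : ∃ i, ∀ v ∈ A, i ∈ S v := by
  obtain ⟨v₀, hv₀⟩ := hA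
  obtain ⟨r, hr, -⟩ := hpair v₀ hv₀ v₀ hv₀
  have hgate (v : A) : ∃ t ∈ S v, ∃ a : T.Walk r t,
      a.IsPath ∧ ∀ x ∈ a.support, x ∈ S v → x = t := by
    obtain ⟨j, hj₀, hj⟩ := hpair v₀ hv₀ v v.2
    obtain ⟨w, -⟩ := exists_isPath_support_subset (hS v₀ hv₀) hr hj₀
    obtain ⟨t, ht, a, ha⟩ := exists_walk_to_first_mem w hj
    exact ⟨t, ht, a.bypass, a.bypass_isPath,
      fun x hx => ha x (a.support_bypass_subset_support hx)⟩
  choose t ht a ha hfirst using hgate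
  have hpath (v : A) {j : ι} (hj : j ∈ S v) : ∃ q : T.Walk (t v) j,
      ((a v).append q).IsPath ∧ ∀ x ∈ q.support, x ∈ S v := by
    obtain ⟨q, hq, hqS⟩ := exists_isPath_support_subset (hS v v.2) (ht v) hj
    exact ⟨q, isPath_append_of_first_mem (ha v) hq (hfirst v) hqS, hqS⟩
  obtain ⟨v, -, hmax⟩ := A.attach.exists_max_image (fun v => (a v).length) ⟨⟨v₀, hv₀⟩, by simp⟩
  refine ⟨t v, fun w hw => ?_⟩
  obtain ⟨j, hjv, hjw⟩ := hpair v v.2 w hw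
  obtain ⟨qv, hqv, -⟩ := hpath v hjv
  obtain ⟨qw, hqw, hqwS⟩ := hpath ⟨w, hw⟩ hjw
  have hunique : (a v).append qv = (a ⟨w, hw⟩).append qw :=
    congrArg Subtype.val ((hT.subsingleton_path r j).elim ⟨_, hqv⟩ ⟨_, hqw⟩)
  have htv : ((a v).append qv).getVert (a v).length = t v := by
    simp [SimpleGraph.Walk.getVert_append]
  have hle : (a ⟨w, hw⟩).length ≤ (a v).length := hmax ⟨w, hw⟩ (Finset.mem_attach _ _)
  rw [hunique, SimpleGraph.Walk.getVert_append, if_neg hle.not_gt] at htv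
  exact htv ▸ hqwS _ (qw.getVert_mem_support _)

end Subtrees

lemma TreewidthAtMost.card_le_of_clique {J : Set Atom} {k : ℕ} (h : TreewidthAtMost J k)
    {A : Finset FTerm} (hA : ∀ u ∈ A, ∀ v ∈ A, ∃ a ∈ J, u ∈ a.2 ∧ v ∈ a.2) : A.card ≤ k + 1 := by
  obtain ⟨ι, T, bag, -, hT, hadom, hadj, hconn, hcard⟩ := h
  obtain rfl | hne := A.eq_empty_or_nonempty
  · simp
  have hpair : ∀ u ∈ A, ∀ v ∈ A, ({i | u ∈ bag i} ∩ {i | v ∈ bag i}).Nonempty := by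
    intro u hu v hv
    obtain ⟨a, ha, hua, hva⟩ := hA u hu v hv
    by_cases huv : u = v
    · obtain ⟨i, hi⟩ := hadom u ⟨a, ha, hua⟩
      exact ⟨i, hi, huv ▸ hi⟩
    · exact hadj u v ⟨huv, a, ha, hua, hva⟩
  obtain ⟨i, hi⟩ := exists_mem_of_pairwise_inter_subtrees hT hne (fun v _ => hconn v) hpair
  exact (Finset.card_le_card hi).trans (hcard i)

lemma TreewidthAtMost.finite_of_clique {J : Set Atom} {k : ℕ} (h : TreewidthAtMost J k)
    {K : Set FTerm} (hK : ∀ u ∈ K, ∀ v ∈ K, ∃ a ∈ J, u ∈ a.2 ∧ v ∈ a.2) : K.Finite := by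
  by_contra hinf
  obtain ⟨A, hAK, hA⟩ := Set.Infinite.exists_subset_card_eq hinf (k + 2)
  have := h.card_le_of_clique fun u hu v hv => hK u (hAK hu) v (hAK hv)
  omega

lemma exists_treewidthAtMost_of_finite_adom {J : Set Atom} (h : (adom J).Finite) :
    ∃ k, TreewidthAtMost J k := by
  refine ⟨h.toFinset.card, Unit, ⊥, fun _ => h.toFinset, SimpleGraph.IsTree.of_subsingleton.1,
    SimpleGraph.isAcyclic_bot, fun v hv => ⟨(), by simpa using hv⟩, ?_, ?_, fun _ => by simp⟩
  · rintro u v ⟨-, a, ha, hu, hv⟩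
    exact ⟨(), h.mem_toFinset.2 ⟨a, ha, hu⟩, h.mem_toFinset.2 ⟨a, ha, hv⟩⟩
  · intro v a b
    rw [Subsingleton.elim a b]

/-! ### The prime encoding of runs -/

lemma lt_nextPrime (n : ℕ) : n < nextPrime n :=
  (Nat.find_spec (Nat.exists_infinite_primes (n + 1))).1

lemma prime_nextPrime (n : ℕ) : (nextPrime n).Prime :=
  (Nat.find_spec (Nat.exists_infinite_primes (n + 1))).2

lemma prime_prm : ∀ i, (prm i).Prime
  | 0 => Nat.prime_two
  | _ + 1 => prime_nextPrime _

lemma strictMono_prm : StrictMono prm :=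
  strictMono_nat_of_lt_succ fun i => lt_nextPrime (prm i)

lemma prm_pos (i : ℕ) : 0 < prm i := (prime_prm i).pos

lemma prm_dvd_prm_iff {i j : ℕ} : prm i ∣ prm j ↔ i = j := by
  rw [Nat.prime_dvd_prime_iff_eq (prime_prm i) (prime_prm j), strictMono_prm.injective.eq_iff]

lemma prm_dvd_prm_pow_iff {i j e : ℕ} : prm i ∣ prm j ^ e ↔ i = j ∧ e ≠ 0 := by
  obtain rfl | he := eq_or_ne e 0
  · simp [(prime_prm i).ne_one]
  · rw [(prime_prm i).prime.dvd_pow_iff_dvd he, prm_dvd_prm_iff, and_iff_left he]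

lemma ite_prm_pos (c : Prop) [Decidable c] (i : ℕ) : 0 < if c then prm i else 1 := by
  split_ifs
  exacts [prm_pos i, one_pos]

lemma div_gcd_mul_div_div_gcd {a b n n' : ℕ} (hb : 0 < b) (h : a * n = b * n') :
    a / a.gcd b * n / (b / a.gcd b) = n' ∧ b / a.gcd b ∣ n := by
  have hg : 0 < a.gcd b := Nat.gcd_pos_of_pos_right a hb
  have hreduced : a / a.gcd b * n = b / a.gcd b * n' := by
    apply Nat.eq_of_mul_eq_mul_left hg
    rw [← mul_assoc, ← mul_assoc, Nat.mul_div_cancel' (Nat.gcd_dvd_left a b),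
      Nat.mul_div_cancel' (Nat.gcd_dvd_right a b), h]
  exact ⟨Nat.div_eq_of_eq_mul_right (Nat.div_gcd_pos_of_pos_right a hb) hreduced,
    (Nat.coprime_div_gcd_div_gcd hg).symm.dvd_of_dvd_mul_left ⟨n', hreduced⟩⟩

lemma ite_mul_pow_eq_ite_mul_pow_add {d : ℤ} (hd : d.natAbs ≤ 1) (P c : ℕ) :
    (if (if c ≠ 0 then d else max d 0) = 1 then P else 1) * P ^ c =
      (if (if c ≠ 0 then d else max d 0) = -1 then P else 1) * P ^ ((c : ℤ) + d).toNat := by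
  obtain rfl | rfl | rfl : d = 0 ∨ d = 1 ∨ d = -1 := by omega
  · simp
  · simp [pow_succ']
  · rcases c with _ | c <;> simp [pow_succ']

namespace TCM

variable (M : TCM)

lemma p_pos : 0 < M.p := Finset.prod_pos fun i _ => prm_pos i

variable {M} in
lemma prm_dvd_mod_p_iff {i n : ℕ} (hi : i < M.m + 3) : prm i ∣ n % M.p ↔ prm i ∣ n :=
  Nat.dvd_mod_iff (Finset.dvd_prod_of_mem prm (Finset.mem_range.2 hi))

lemma qr_pos (i : ℕ) : 0 < M.qi i ∧ 0 < M.ri i := by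
  unfold qi ri qr
  rcases M.stateOf i with _ | s
  · simp
  · dsimp only
    rcases M.step s _ _ with _ | ⟨s', d1, d2⟩
    · simp
    · dsimp only
      constructor
      · apply Nat.div_gcd_pos_of_pos_left
        exact Nat.mul_pos (Nat.mul_pos (Nat.mul_pos (prm_pos _) (prm_pos _)) (ite_prm_pos _ _))
          (ite_prm_pos _ _)
      · apply Nat.div_gcd_pos_of_pos_right
        exact Nat.mul_pos (Nat.mul_pos (prm_pos _) (ite_prm_pos _ _)) (ite_prm_pos _ _)

lemma prm_dvd_enc_iff (C : Config) (i : ℕ) : prm i ∣ M.enc C ↔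
    i = C.1 ∨ (i = M.m ∧ C.2.1 ≠ 0) ∨ (i = M.m + 1 ∧ C.2.2.1 ≠ 0) ∨
      (i = M.m + 2 ∧ C.2.2.2 ≠ 0) := by
  simp only [enc, (prime_prm i).dvd_mul, prm_dvd_prm_iff, prm_dvd_prm_pow_iff, or_assoc]

lemma step_mem {q q' : ℕ} {b1 b2 : Bool} {d1 d2 : ℤ}
    (h : M.step q b1 b2 = some (q', d1, d2)) : q' < M.m ∧ d1.natAbs ≤ 1 ∧ d2.natAbs ≤ 1 := by
  obtain ⟨e, he, h⟩ := Option.map_eq_some_iff.1 h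
  have hwf := (M.wf e (List.mem_of_find?_eq_some he)).2
  rwa [h] at hwf

lemma next_eq_none_iff {C : Config} : M.next C = none ↔
    M.step C.1 (decide (C.2.1 ≠ 0)) (decide (C.2.2.1 ≠ 0)) = none := by
  unfold next
  split <;> simp only [*, reduceCtorEq]

lemma next_eq_some_iff {C C' : Config} : M.next C = some C' ↔ ∃ q' d1 d2,
    M.step C.1 (decide (C.2.1 ≠ 0)) (decide (C.2.2.1 ≠ 0)) = some (q', d1, d2) ∧
      C' = (q', ((C.2.1 : ℤ) + d1).toNat, ((C.2.2.1 : ℤ) + d2).toNat, C.2.2.2 + 1) := by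
  unfold next
  split <;> simp only [*, reduceCtorEq, false_and, exists_false, Option.some.injEq]
  grind

section ValidState

variable {M} {C C' : Config}

lemma stateOf_enc_mod_p (hC : C.1 < M.m) : M.stateOf (M.enc C % M.p) = some C.1 := by
  have hdvd {s : ℕ} (hs : s < M.m) : prm s ∣ M.enc C % M.p ↔ s = C.1 := by
    rw [prm_dvd_mod_p_iff (by omega), prm_dvd_enc_iff]
    omega
  rw [stateOf, List.find?_range_eq_some]
  exact ⟨by simp [hdvd hC], List.mem_range.2 hC,
    fun j hj => by simp [hdvd (hj.trans hC), hj.ne]⟩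

lemma decide_prm_dvd_enc_mod_p (hC : C.1 < M.m) :
    decide (prm M.m ∣ M.enc C % M.p) = decide (C.2.1 ≠ 0) ∧
      decide (prm (M.m + 1) ∣ M.enc C % M.p) = decide (C.2.2.1 ≠ 0) := by
  constructor <;>
  · rw [decide_eq_decide, prm_dvd_mod_p_iff (by omega), prm_dvd_enc_iff]
    omega

lemma qr_enc_of_next_eq_none (hC : C.1 < M.m) (h : M.next C = none) :
    M.qr (M.enc C % M.p) = (1, 1) := by
  obtain ⟨h1, h2⟩ := decide_prm_dvd_enc_mod_p hC
  simp only [qr, stateOf_enc_mod_p hC, h1, h2, (M.next_eq_none_iff).1 h]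

lemma exists_qr_enc_of_next (hC : C.1 < M.m) (h : M.next C = some C') : ∃ a b, 0 < b ∧
    M.qr (M.enc C % M.p) = (a / a.gcd b, b / a.gcd b) ∧ a * M.enc C = b * M.enc C' := by
  obtain ⟨q', d1, d2, hstep, rfl⟩ := M.next_eq_some_iff.1 h
  obtain ⟨-, hd1, hd2⟩ := M.step_mem hstep
  obtain ⟨h1, h2⟩ := decide_prm_dvd_enc_mod_p hC
  have hc1 := ite_mul_pow_eq_ite_mul_pow_add hd1 (prm M.m) C.2.1
  have hc2 := ite_mul_pow_eq_ite_mul_pow_add hd2 (prm (M.m + 1)) C.2.2.1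
  simp only [qr, stateOf_enc_mod_p hC, h1, h2, hstep, decide_eq_true_eq]
  refine ⟨_, _, ?_, rfl, ?_⟩
  · exact Nat.mul_pos (Nat.mul_pos (prm_pos _) (ite_prm_pos _ _)) (ite_prm_pos _ _)
  · unfold enc
    linear_combination
      prm q' * prm (M.m + 2) * prm C.1 * prm (M.m + 2) ^ C.2.2.2 * congrArg₂ HMul.hMul hc1 hc2

lemma g_enc_of_next_eq_none (hC : C.1 < M.m) (h : M.next C = none) : M.g (M.enc C) = M.enc C := by
  simp [g, qi, ri, qr_enc_of_next_eq_none hC h]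

lemma g_enc_of_next (hC : C.1 < M.m) (h : M.next C = some C') : M.g (M.enc C) = M.enc C' := by
  obtain ⟨a, b, hb, hqr, heq⟩ := exists_qr_enc_of_next hC h
  simp only [g, qi, ri, hqr]
  exact (div_gcd_mul_div_div_gcd hb heq).1

lemma ri_dvd_enc (hC : C.1 < M.m) : M.ri (M.enc C % M.p) ∣ M.enc C := by
  rcases h : M.next C with _ | C'
  · simp [ri, qr_enc_of_next_eq_none hC h]
  · obtain ⟨a, b, hb, hqr, heq⟩ := exists_qr_enc_of_next hC h
    simp only [ri, hqr]
    exact (div_gcd_mul_div_div_gcd hb heq).2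

end ValidState

variable {M}

lemma run_succ_eq_some_iff {n : ℕ} {C' : Config} :
    M.run (n + 1) = some C' ↔ ∃ C, M.run n = some C ∧ M.next C = some C' :=
  Option.bind_eq_some_iff

lemma state_lt_and_time_eq_of_run {n : ℕ} {C : Config} (h : M.run n = some C) :
    C.1 < M.m ∧ C.2.2.2 = n := by
  induction n generalizing C with
  | zero => cases h; exact ⟨M.hm, rfl⟩
  | succ n ih =>
    obtain ⟨D, hD, hnext⟩ := run_succ_eq_some_iff.1 h
    obtain ⟨q', d1, d2, hstep, rfl⟩ := M.next_eq_some_iff.1 hnext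
    exact ⟨(M.step_mem hstep).1, congrArg (· + 1) (ih hD).2⟩

lemma state_lt_of_run {n : ℕ} {C : Config} (h : M.run n = some C) : C.1 < M.m :=
  (state_lt_and_time_eq_of_run h).1

lemma gIter_succ (n : ℕ) : M.gIter (n + 1) = M.g (M.gIter n) :=
  Function.iterate_succ_apply' _ _ _

lemma gIter_eq_enc_of_run {n : ℕ} {C : Config} (h : M.run n = some C) :
    M.gIter n = M.enc C := by
  induction n generalizing C with
  | zero => cases h; simp [gIter, enc, prm]
  | succ n ih =>
    obtain ⟨D, hD, hnext⟩ := run_succ_eq_some_iff.1 h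
    rw [gIter_succ, ih hD, g_enc_of_next (state_lt_of_run hD) hnext]

lemma exists_run_of_not_halts (hM : ¬ M.Halts) (n : ℕ) : ∃ C, M.run n = some C := by
  induction n with
  | zero => exact ⟨_, rfl⟩
  | succ n ih =>
    obtain ⟨C, hC⟩ := ih
    rcases hnext : M.next C with _ | C'
    · exact absurd ⟨n, C, hC, hnext⟩ hM
    · exact ⟨C', run_succ_eq_some_iff.2 ⟨C, hC, hnext⟩⟩

lemma Halts.exists_gIter_lt (hM : M.Halts) : ∃ B, ∀ n, M.gIter n < B := by
  obtain ⟨n, C, hrun, hnext⟩ := hM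
  have hconst : ∀ k, n ≤ k → M.gIter k = M.gIter n := by
    refine fun k hk => Nat.le_induction rfl (fun k _ ih => ?_) k hk
    rw [gIter_succ, ih, gIter_eq_enc_of_run hrun,
      g_enc_of_next_eq_none (state_lt_of_run hrun) hnext]
  obtain ⟨B, hB⟩ := ((Finset.range (n + 1)).image M.gIter).exists_nat_subset_range
  refine ⟨B, fun k => Finset.mem_range.1 (hB (Finset.mem_image.2 ⟨min k n, by simp, ?_⟩))⟩
  rcases le_total k n with hk | hk
  · rw [min_eq_left hk]
  · rw [min_eq_right hk, hconst k hk]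

lemma le_gIter_of_not_halts (hM : ¬ M.Halts) (n : ℕ) : n ≤ M.gIter n := by
  obtain ⟨C, hC⟩ := exists_run_of_not_halts hM n
  have hpos : 0 < prm C.1 * prm M.m ^ C.2.1 * prm (M.m + 1) ^ C.2.2.1 :=
    Nat.mul_pos (Nat.mul_pos (prm_pos _) (pow_pos (prm_pos _) _)) (pow_pos (prm_pos _) _)
  calc n ≤ prm (M.m + 2) ^ n := (Nat.lt_pow_self (prime_prm _).one_lt).le
    _ ≤ M.enc C := by
      rw [enc, (state_lt_and_time_eq_of_run hC).2]
      exact Nat.le_mul_of_pos_left _ hpos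
    _ = M.gIter n := (gIter_eq_enc_of_run hC).symm

lemma ri_dvd_gIter_of_not_halts (hM : ¬ M.Halts) (n : ℕ) :
    M.ri (M.gIter n % M.p) ∣ M.gIter n := by
  obtain ⟨C, hC⟩ := exists_run_of_not_halts hM n
  exact gIter_eq_enc_of_run hC ▸ ri_dvd_enc (state_lt_of_run hC)

end TCM

/-! ### The rules of `R_M` as closure conditions on atom sets -/

section Rules

variable {J : Set Atom} {R : Rule} {σ τ : Subst}

lemma mem_varsF_iff {A : Finset Atom} {v : Var} : v ∈ varsF A ↔ ∃ a ∈ A, Sum.inr v ∈ a.2 := by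
  simp only [varsF, atomVarsF, Finset.mem_biUnion, List.mem_toFinset, List.mem_filterMap,
    Sum.getRight?_eq_some_iff, exists_eq_right]

lemma applyA_congr {a : Atom} (h : ∀ v, Sum.inr v ∈ a.2 → σ v = τ v) :
    applyA σ a = applyA τ a := by
  refine Prod.ext rfl (List.map_congr_left ?_)
  rintro (c | v) hv
  exacts [rfl, h v hv]

lemma isHomOn_congr {A : Finset Atom} (h : ∀ v ∈ varsF A, σ v = τ v) :
    IsHomOn σ (A : Set Atom) J ↔ IsHomOn τ (A : Set Atom) J :=
  forall₂_congr fun a ha => by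
    rw [applyA_congr fun v hv => h v (mem_varsF_iff.2 ⟨a, ha, hv⟩)]

lemma satisfiesRule_iff_of_varsF_subset (h : varsF R.2 ⊆ varsF R.1) :
    SatisfiesRule J R ↔
      ∀ σ, IsHomOn σ (R.1 : Set Atom) J → IsHomOn σ (R.2 : Set Atom) J := by
  refine forall₂_congr fun σ _ => ⟨?_, fun hhead => ⟨σ, fun _ _ => rfl, hhead⟩⟩
  rintro ⟨τ, hτ, hhead⟩
  exact (isHomOn_congr fun v hv => hτ v (h hv)).1 hhead

lemma satisfiesRule_iff_of_varsF_subset_insert {v : Var} (hv : v ∉ varsF R.1)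
    (h : varsF R.2 ⊆ insert v (varsF R.1)) :
    SatisfiesRule J R ↔ ∀ σ, IsHomOn σ (R.1 : Set Atom) J →
      ∃ x, IsHomOn (Function.update σ v x) (R.2 : Set Atom) J := by
  refine forall₂_congr fun σ _ => ⟨?_, ?_⟩
  · rintro ⟨τ, hτ, hhead⟩
    refine ⟨τ v, (isHomOn_congr fun w hw => ?_).1 hhead⟩
    rcases eq_or_ne w v with rfl | hwv
    · exact (Function.update_self w (τ w) σ).symm
    · rw [Function.update_of_ne hwv]
      exact hτ w (Finset.mem_of_mem_insert_of_ne (h hw) hwv)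
  · rintro ⟨x, hhead⟩
    exact ⟨_, fun w hw => Function.update_of_ne (ne_of_mem_of_not_mem hw hv) x σ, hhead⟩

lemma isHomOn_singleton {a : Atom} :
    IsHomOn σ (({a} : Finset Atom) : Set Atom) J ↔ applyA σ a ∈ J := by
  simp [IsHomOn]

lemma isHomOn_insert {a : Atom} {A : Finset Atom} :
    IsHomOn σ ((insert a A : Finset Atom) : Set Atom) J ↔
      applyA σ a ∈ J ∧ IsHomOn σ (A : Set Atom) J := by
  simp [IsHomOn]

lemma isHomOn_union {A B : Finset Atom} :
    IsHomOn σ ((A ∪ B : Finset Atom) : Set Atom) J ↔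
      IsHomOn σ (A : Set Atom) J ∧ IsHomOn σ (B : Set Atom) J := by
  simp only [IsHomOn, Finset.mem_coe, Finset.mem_union, or_imp, forall_and]

lemma isHomOn_biUnion {ι : Type*} {s : Finset ι} {A : ι → Finset Atom} :
    IsHomOn σ ((s.biUnion A : Finset Atom) : Set Atom) J ↔
      ∀ i ∈ s, IsHomOn σ (A i : Set Atom) J := by
  simp only [IsHomOn, Finset.mem_coe, Finset.mem_biUnion]
  exact ⟨fun h i hi a ha => h a ⟨i, hi, ha⟩, fun h a ⟨i, hi, ha⟩ => h i hi a ha⟩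

end Rules

section SPaths

variable {J : Set Atom} {σ : Subst} {a b base n : ℕ}

lemma sPath_iff_exists_forall_lt {s t : FTerm} :
    SPath J n s t ↔
      ∃ u : ℕ → FTerm, u 0 = s ∧ u n = t ∧ ∀ j < n, (pS, [u j, u (j + 1)]) ∈ J := by
  induction n generalizing s with
  | zero => exact ⟨fun h => ⟨fun _ => s, rfl, h, by simp⟩, fun ⟨u, hs, ht, _⟩ => hs.symm.trans ht⟩
  | succ n ih =>
    constructor
    · rintro ⟨r, hsr, hrt⟩
      obtain ⟨u, rfl, hn, hu⟩ := ih.1 hrt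
      exact ⟨Stream'.cons s u, rfl, hn, fun j hj => j.casesOn (fun _ => hsr)
        (fun j hj => hu j (by omega)) hj⟩
    · rintro ⟨u, rfl, hn, hu⟩
      exact ⟨u 1, hu 0 n.succ_pos, ih.2 ⟨fun j => u (j + 1), rfl, hn, fun j hj => hu _ (by omega)⟩⟩

lemma isHomOn_spath_iff : IsHomOn σ (spath a b base n : Set Atom) J ↔ ∀ j < n,
    (pS, [applyT σ (pathVar a b base n j), applyT σ (pathVar a b base n (j + 1))]) ∈ J := by
  simp [IsHomOn, spath, applyA]

lemma sPath_of_isHomOn_spath (hn : 0 < n) (h : IsHomOn σ (spath a b base n : Set Atom) J) :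
    SPath J n (σ (Sum.inl a)) (σ (Sum.inl b)) :=
  sPath_iff_exists_forall_lt.2 ⟨fun j => applyT σ (pathVar a b base n j), by
    simp [pathVar, vt, applyT], by simp [pathVar, vt, applyT, hn.ne'], isHomOn_spath_iff.1 h⟩

lemma isHomOn_spath {u : ℕ → FTerm} (h0 : σ (Sum.inl a) = u 0) (hn : σ (Sum.inl b) = u n)
    (hfresh : ∀ j, 0 < j → j < n → σ (Sum.inl (base + j)) = u j)
    (h : ∀ j < n, (pS, [u j, u (j + 1)]) ∈ J) :
    IsHomOn σ (spath a b base n : Set Atom) J := by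
  have happly : ∀ j ≤ n, applyT σ (pathVar a b base n j) = u j := by
    intro j hj
    unfold pathVar
    split_ifs with hj0 hjn
    · exact hj0 ▸ h0
    · exact hjn ▸ hn
    · exact hfresh j (by omega) (by omega)
  refine isHomOn_spath_iff.2 fun j hj => ?_
  rw [happly j hj.le, happly (j + 1) hj]
  exact h j hj

lemma right_mem_varsF_spath (hn : 0 < n) : Sum.inl b ∈ varsF (spath a b base n) := by
  refine mem_varsF_iff.2 ⟨_, Finset.mem_image.2 ⟨n - 1, by simpa using hn, rfl⟩, ?_⟩
  simp [pathVar, vt, Nat.sub_add_cancel hn, hn.ne']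

end SPaths

section ClosureConditions

variable {M : TCM} {J : Set Atom} {i : ℕ}

/-- The substitution `x₀ ↦ x, x₁ ↦ y, x₂ ↦ z` for rules with at most three variables (the value
`z` at all other variables is arbitrary). -/
def subst₃ (x y z : FTerm) : Subst
  | Sum.inl 0 => x
  | Sum.inl 1 => y
  | _ => z

lemma satisfiesRule_ruleS_iff :
    SatisfiesRule J ruleS ↔ ∀ x y, (pS0, [x, y]) ∈ J → (pS, [x, y]) ∈ J := by
  rw [satisfiesRule_iff_of_varsF_subset (by simp [ruleS, Finset.subset_iff, mem_varsF_iff])]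
  simp only [ruleS, isHomOn_singleton]
  exact ⟨fun h x y => h (subst₃ x y y), fun h σ => h _ _⟩

lemma satisfiesRule_ruleR_iff :
    SatisfiesRule J (ruleR M i) ↔ ∀ x y z, (pR i, [x, y]) ∈ J → (pS, [y, z]) ∈ J →
      (pR ((i + 1) % M.p), [x, z]) ∈ J := by
  rw [satisfiesRule_iff_of_varsF_subset (by
    simp +contextual [ruleR, Finset.subset_iff, mem_varsF_iff, or_imp])]
  simp only [ruleR, isHomOn_insert, isHomOn_singleton, and_imp]
  exact ⟨fun h x y z => h (subst₃ x y z), fun h σ => h _ _ _⟩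

lemma exists_isHomOn_ruleT_body {x y z y' z' : FTerm} (hT : (pT i, [x, y, z]) ∈ J)
    (hy : SPath J (M.ri i) y y') (hz : SPath J (M.qi i) z z') :
    ∃ σ : Subst, IsHomOn σ ((ruleT M i).1 : Set Atom) J ∧
      σ (Sum.inl 0) = x ∧ σ (Sum.inl 3) = y' ∧ σ (Sum.inl 4) = z' := by
  obtain ⟨u, rfl, rfl, hu⟩ := sPath_iff_exists_forall_lt.1 hy
  obtain ⟨w, rfl, rfl, hw⟩ := sPath_iff_exists_forall_lt.1 hz
  let σ : Subst
    | Sum.inl 0 => x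
    | Sum.inl 1 => u 0
    | Sum.inl 2 => w 0
    | Sum.inl 3 => u (M.ri i)
    | Sum.inl 4 => w (M.qi i)
    | Sum.inl k => if k < 11 + M.ri i then u (k - 10) else w (k - (11 + M.ri i))
    | Sum.inr _ => x
  have hσ (k : ℕ) : σ (Sum.inl (k + 5)) =
      if k + 5 < 11 + M.ri i then u (k + 5 - 10) else w (k + 5 - (11 + M.ri i)) := rfl
  refine ⟨σ, ?_, rfl, rfl, rfl⟩
  simp only [ruleT, isHomOn_union, isHomOn_singleton]
  refine ⟨⟨hT, isHomOn_spath rfl rfl (fun j _ hj => ?_) hu⟩,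
    isHomOn_spath rfl rfl (fun j _ _ => ?_) hw⟩
  · rw [show 10 + j = j + 5 + 5 by omega, hσ, if_pos (by omega)]
    congr 1
  · rw [show 11 + M.ri i + j = 6 + M.ri i + j + 5 by omega, hσ, if_neg (by omega)]
    congr 1
    omega

lemma satisfiesRule_ruleT_iff :
    SatisfiesRule J (ruleT M i) ↔ ∀ x y z y' z', (pT i, [x, y, z]) ∈ J →
      SPath J (M.ri i) y y' → SPath J (M.qi i) z z' → (pT i, [x, y', z']) ∈ J := by
  obtain ⟨hq, hr⟩ := M.qr_pos i
  have hvars : varsF (ruleT M i).2 ⊆ varsF (ruleT M i).1 := by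
    have hy' := right_mem_varsF_spath (a := 1) (b := 3) (base := 10) hr
    have hz' := right_mem_varsF_spath (a := 2) (b := 4) (base := 11 + M.ri i) hq
    simp only [varsF, ruleT, Finset.union_biUnion, Finset.singleton_biUnion] at hy' hz' ⊢
    simp [atomVarsF, vt, Finset.insert_subset_iff, hy', hz']
  rw [satisfiesRule_iff_of_varsF_subset hvars]
  constructor
  · intro h x y z y' z' hT hy hz
    obtain ⟨σ, hσ, rfl, rfl, rfl⟩ := exists_isHomOn_ruleT_body hT hy hz
    exact isHomOn_singleton.1 (h σ hσ)
  · intro h σ hσ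
    simp only [ruleT, isHomOn_union, isHomOn_singleton] at hσ ⊢
    obtain ⟨⟨hT, hy⟩, hz⟩ := hσ
    exact h _ _ _ _ _ hT (sPath_of_isHomOn_spath hr hy) (sPath_of_isHomOn_spath hq hz)

lemma satisfiesRule_ruleFloodProp_iff :
    SatisfiesRule J ruleFloodProp ↔ ∀ x y, (pS, [x, y]) ∈ J → (pFlood, [y]) ∈ J := by
  rw [satisfiesRule_iff_of_varsF_subset (by
    simp +contextual [ruleFloodProp, Finset.subset_iff, mem_varsF_iff])]
  simp only [ruleFloodProp, isHomOn_singleton]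
  exact ⟨fun h x y => h (subst₃ x y y), fun h σ => h _ _⟩

lemma satisfiesRule_ruleSEnd_iff :
    SatisfiesRule J ruleSEnd ↔ ∀ x, (pEnd, [x]) ∈ J → (pS, [x, x]) ∈ J := by
  rw [satisfiesRule_iff_of_varsF_subset (by simp [ruleSEnd, Finset.subset_iff, mem_varsF_iff])]
  simp only [ruleSEnd, isHomOn_singleton]
  exact ⟨fun h x => h (subst₃ x x x), fun h σ => h _⟩

lemma satisfiesRule_ruleGInit_iff :
    SatisfiesRule J ruleGInit ↔ ∀ x y z, (pS, [x, y]) ∈ J → (pS, [y, z]) ∈ J →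
      (pG, [x, z]) ∈ J := by
  have hspath : spath 0 1 10 2 = {(pS, [vt 0, vt 11]), (pS, [vt 11, vt 1])} := rfl
  rw [satisfiesRule_iff_of_varsF_subset (by
    simp +contextual [ruleGInit, hspath, Finset.subset_iff, mem_varsF_iff, or_imp])]
  simp only [ruleGInit, hspath, isHomOn_insert, isHomOn_singleton, and_imp]
  exact ⟨fun h x y z => h (subst₃ x z y), fun h σ => h _ _ _⟩

lemma satisfiesRule_ruleGStep_iff :
    SatisfiesRule J (ruleGStep i) ↔ ∀ x y z, (pG, [x, y]) ∈ J → (pR i, [x, y]) ∈ J →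
      (pT i, [x, y, z]) ∈ J → (pG, [x, z]) ∈ J := by
  rw [satisfiesRule_iff_of_varsF_subset (by
    simp +contextual [ruleGStep, Finset.subset_iff, mem_varsF_iff, or_imp])]
  simp only [ruleGStep, isHomOn_insert, isHomOn_singleton, and_imp]
  exact ⟨fun h x y z => h (subst₃ x y z), fun h σ => h _ _ _⟩

lemma satisfiesRule_ruleFloodGen_iff :
    SatisfiesRule J (ruleFloodGen M) ↔ ∀ x y z, (pFlood, [x]) ∈ J → (pFlood, [y]) ∈ J →
      (pFlood, [z]) ∈ J →
        (pG, [x, y]) ∈ J ∧ ∀ j < M.p, (pR j, [x, y]) ∈ J ∧ (pT j, [x, y, z]) ∈ J := by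
  rw [satisfiesRule_iff_of_varsF_subset (by
    simp +contextual [ruleFloodGen, Finset.subset_iff, mem_varsF_iff, or_imp])]
  simp only [ruleFloodGen, isHomOn_union, isHomOn_biUnion, isHomOn_insert, isHomOn_singleton,
    and_imp, Finset.mem_range]
  exact ⟨fun h x y z => h (subst₃ x y z), fun h σ => h _ _ _⟩

lemma satisfiesRule_ruleEx_iff :
    SatisfiesRule J (ruleEx M) ↔ ∀ y z, (pG, [y, z]) ∈ J → (pEnd, [z]) ∈ J →
      ∃ x, (pS0, [x, y]) ∈ J ∧ (pR 0, [x, x]) ∈ J ∧ ∀ j < M.p, (pT j, [x, x, x]) ∈ J := by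
  rw [satisfiesRule_iff_of_varsF_subset_insert (v := Sum.inl 0)
    (by simp [ruleEx, mem_varsF_iff, vt])
    (by simp +contextual [ruleEx, Finset.subset_iff, mem_varsF_iff, or_imp, vt])]
  simp only [ruleEx, isHomOn_union, isHomOn_biUnion, isHomOn_insert, isHomOn_singleton,
    and_imp, Finset.mem_range, and_assoc]
  exact ⟨fun h y z => h (subst₃ y y z), fun h σ => h _ _⟩

/-- `J` satisfies every rule of `R_M`, with the universally quantified variables of the rules
spelled out as terms; the rules are listed in the order (1)–(9). -/
structure RMClosed (M : TCM) (J : Set Atom) : Prop where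
  s : ∀ x y, (pS0, [x, y]) ∈ J → (pS, [x, y]) ∈ J
  r : ∀ i < M.p, ∀ x y z, (pR i, [x, y]) ∈ J → (pS, [y, z]) ∈ J →
    (pR ((i + 1) % M.p), [x, z]) ∈ J
  t : ∀ i < M.p, ∀ x y z y' z', (pT i, [x, y, z]) ∈ J → SPath J (M.ri i) y y' →
    SPath J (M.qi i) z z' → (pT i, [x, y', z']) ∈ J
  flood : ∀ x y, (pS, [x, y]) ∈ J → (pFlood, [y]) ∈ J
  s_end : ∀ x, (pEnd, [x]) ∈ J → (pS, [x, x]) ∈ J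
  g_init : ∀ x y z, (pS, [x, y]) ∈ J → (pS, [y, z]) ∈ J → (pG, [x, z]) ∈ J
  g_step : ∀ i < M.p, ∀ x y z, (pG, [x, y]) ∈ J → (pR i, [x, y]) ∈ J →
    (pT i, [x, y, z]) ∈ J → (pG, [x, z]) ∈ J
  flood_gen : ∀ x y z, (pFlood, [x]) ∈ J → (pFlood, [y]) ∈ J → (pFlood, [z]) ∈ J →
    (pG, [x, y]) ∈ J ∧ ∀ j < M.p, (pR j, [x, y]) ∈ J ∧ (pT j, [x, y, z]) ∈ J
  ex : ∀ y z, (pG, [y, z]) ∈ J → (pEnd, [z]) ∈ J →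
    ∃ x, (pS0, [x, y]) ∈ J ∧ (pR 0, [x, x]) ∈ J ∧ ∀ j < M.p, (pT j, [x, x, x]) ∈ J

lemma forall_mem_RM_iff {P : Rule → Prop} : (∀ R ∈ RM M, P R) ↔
    (P ruleS ∧ P ruleFloodProp ∧ P ruleSEnd ∧ P ruleGInit ∧ P (ruleFloodGen M) ∧ P (ruleEx M)) ∧
      ∀ i < M.p, P (ruleR M i) ∧ P (ruleT M i) ∧ P (ruleGStep i) := by
  simp only [RM, Finset.forall_mem_union, Finset.forall_mem_insert, Finset.mem_singleton,
    forall_eq, Finset.mem_biUnion, Finset.mem_range, forall_exists_index, and_imp,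
    @forall_comm Rule]

lemma satisfiesRule_RM_iff_rmClosed : (∀ R ∈ RM M, SatisfiesRule J R) ↔ RMClosed M J := by
  rw [forall_mem_RM_iff, satisfiesRule_ruleS_iff, satisfiesRule_ruleFloodProp_iff,
    satisfiesRule_ruleSEnd_iff, satisfiesRule_ruleGInit_iff, satisfiesRule_ruleFloodGen_iff,
    satisfiesRule_ruleEx_iff]
  simp only [satisfiesRule_ruleR_iff, satisfiesRule_ruleT_iff, satisfiesRule_ruleGStep_iff]
  constructor
  · rintro ⟨⟨hs, hflood, hend, hinit, hgen, hex⟩, hi⟩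
    exact ⟨hs, fun i h => (hi i h).1, fun i h => (hi i h).2.1, hflood, hend, hinit,
      fun i h => (hi i h).2.2, hgen, hex⟩
  · rintro ⟨hs, hr, ht, hflood, hend, hinit, hstep, hgen, hex⟩
    exact ⟨⟨hs, hflood, hend, hinit, hgen, hex⟩, fun i h => ⟨hr i h, ht i h, hstep i h⟩⟩

end ClosureConditions

/-! ### Non-halting machines -/

/-- `x` is the null that rule (9) provides for the term `y`. -/
def IsChild (M : TCM) (U : Set Atom) (x y : FTerm) : Prop :=
  (pS0, [x, y]) ∈ U ∧ (pR 0, [x, x]) ∈ U ∧ ∀ j < M.p, (pT j, [x, x, x]) ∈ U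

section NullChain

variable {M : TCM} {U : Set Atom} {x : ℕ → FTerm} {N : ℕ}

lemma sPath_sub (hS : ∀ a ≤ N, (pS, [x a, x (a - 1)]) ∈ U) (d : ℕ) {a : ℕ} (ha : a ≤ N) :
    SPath U d (x a) (x (a - d)) := by
  induction d generalizing a with
  | zero => rfl
  | succ d ih =>
    refine ⟨x (a - 1), hS a ha, ?_⟩
    rw [add_comm d, ← Nat.sub_sub]
    exact ih (by omega)

namespace RMClosed

lemma r_mod_mem (hU : RMClosed M U) (hS : ∀ a ≤ N, (pS, [x a, x (a - 1)]) ∈ U)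
    (hR : (pR 0, [x N, x N]) ∈ U) (d : ℕ) : (pR (d % M.p), [x N, x (N - d)]) ∈ U := by
  induction d with
  | zero => simpa using hR
  | succ d ih =>
    have hnext := hU.r _ (Nat.mod_lt d M.p_pos) _ _ _ ih (hS (N - d) (by omega))
    rwa [Nat.mod_add_mod, Nat.sub_sub] at hnext

lemma t_mul_mem (hU : RMClosed M U) (hS : ∀ a ≤ N, (pS, [x a, x (a - 1)]) ∈ U) {i : ℕ}
    (hi : i < M.p) (hT : (pT i, [x N, x N, x N]) ∈ U) (a : ℕ) :
    (pT i, [x N, x (N - a * M.ri i), x (N - a * M.qi i)]) ∈ U := by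
  induction a with
  | zero => simpa using hT
  | succ a ih =>
    have hnext := hU.t i hi _ _ _ _ _ ih (sPath_sub hS (M.ri i) (by omega))
      (sPath_sub hS (M.qi i) (by omega))
    rwa [Nat.sub_sub, Nat.sub_sub, ← Nat.succ_mul, ← Nat.succ_mul] at hnext

/-- Rule (7) at `n = gIter k` moves the `G`-edge from distance `n` to distance `g n`: the residue
`n % p` is recorded by `R`, and `n = a * r`, `g n = a * q` are the distances recorded by `T`. -/
lemma g_gIter_mem (hM : ¬ M.Halts) (hU : RMClosed M U)
    (hS : ∀ a ≤ N, (pS, [x a, x (a - 1)]) ∈ U) (hR : (pR 0, [x N, x N]) ∈ U)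
    (hT : ∀ i < M.p, (pT i, [x N, x N, x N]) ∈ U) (k : ℕ) :
    (pG, [x N, x (N - M.gIter k)]) ∈ U := by
  induction k with
  | zero => exact hU.g_init _ _ _ (hS N le_rfl) (hS (N - 1) (by omega))
  | succ k ih =>
    set i := M.gIter k % M.p with hi
    have hip : i < M.p := Nat.mod_lt _ M.p_pos
    obtain ⟨a, ha⟩ : M.ri i ∣ M.gIter k := M.ri_dvd_gIter_of_not_halts hM k
    have hg : M.gIter (k + 1) = a * M.qi i := by
      rw [TCM.gIter_succ, TCM.g, ← hi, ha, mul_left_comm, Nat.mul_div_cancel_left _ (M.qr_pos i).2,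
        mul_comm]
    have hTa := hU.t_mul_mem hS hip (hT i hip) a
    rw [← hg, mul_comm, ← ha] at hTa
    exact hU.g_step i hip _ _ _ ih (hU.r_mod_mem hS hR _) hTa

lemma g_wC_mem_of_isChild (hM : ¬ M.Halts) (hU : RMClosed M U) (hE : (pEnd, [wC]) ∈ U)
    (h0 : x 0 = wC) (hx : ∀ k < N, IsChild M U (x (k + 1)) (x k)) : (pG, [x N, wC]) ∈ U := by
  have hww : (pS, [wC, wC]) ∈ U := hU.s_end _ hE
  rcases N with _ | N
  · rw [h0]
    exact hU.g_init _ _ _ hww hww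
  have hS : ∀ a ≤ N + 1, (pS, [x a, x (a - 1)]) ∈ U := by
    rintro (_ | a) ha
    · simpa [h0] using hww
    · exact hU.s _ _ (hx a ha).1
  obtain ⟨-, hR, hT⟩ := hx N N.lt_succ_self
  have hG := hU.g_gIter_mem hM hS hR hT (N + 1)
  rwa [Nat.sub_eq_zero_of_le (M.le_gIter_of_not_halts hM _), h0] at hG

end RMClosed

lemma exists_seq_of_forall_exists_of_chain {α : Type*} {r : α → α → Prop} {a : α}
    (h : ∀ n (x : ℕ → α), x 0 = a → (∀ k < n, r (x k) (x (k + 1))) → ∃ y, r (x n) y) :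
    ∃ x : ℕ → α, x 0 = a ∧ ∀ n, r (x n) (x (n + 1)) := by
  let next (y : α) : α := if hy : ∃ z, r y z then hy.choose else a
  refine ⟨fun n => next^[n] a, rfl, fun n => ?_⟩
  induction n using Nat.strong_induction_on with
  | _ n ih =>
    have hy : ∃ y, r (next^[n] a) y := h n _ rfl ih
    have hnext : next (next^[n] a) = hy.choose := dif_pos hy
    simpa only [Function.iterate_succ_apply', hnext] using hy.choose_spec

lemma RMClosed.exists_seq_isChild (hM : ¬ M.Halts) (hU : RMClosed M U) (hE : (pEnd, [wC]) ∈ U) :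
    ∃ x : ℕ → FTerm, x 0 = wC ∧ ∀ n, IsChild M U (x (n + 1)) (x n) :=
  exists_seq_of_forall_exists_of_chain (r := fun y x => IsChild M U x y) fun _ _ h0 hx =>
    hU.ex _ _ (hU.g_wC_mem_of_isChild hM hE h0 hx) hE

end NullChain

/-- The constant `w` and the variables `x₀, x₁, …` are enumerated as `w, x₀, x₁, …`. -/
def succTerm : FTerm → FTerm
  | Sum.inr (Sum.inl k) => vt (k + 1)
  | _ => vt 0

/-- A model of `{End(w)}` in which `End` and `S₀` are as small as possible and all other relations
are full. Homomorphisms into it separate the nulls of a universal model. -/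
def succModel : Set Atom :=
  {a | (a.1 = pEnd → a.2 = [wC]) ∧ (a.1 = pS0 → ∃ t, a.2 = [succTerm t, t])}

lemma mem_succModel {P : ℕ} (hE : P ≠ pEnd) (hS : P ≠ pS0) (l : List FTerm) :
    (P, l) ∈ succModel :=
  ⟨fun h => absurd h hE, fun h => absurd h hS⟩

lemma rmClosed_succModel (M : TCM) : RMClosed M succModel := by
  have hR (i : ℕ) := mem_succModel (P := pR i) (by simp [pR, pEnd]) (by grind [pR, pS0])
  have hT (i : ℕ) := mem_succModel (P := pT i) (by simp [pT, pEnd]) (by grind [pT, pS0])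
  have hS := mem_succModel (P := pS) (by decide) (by decide)
  have hG := mem_succModel (P := pG) (by decide) (by decide)
  have hFlood := mem_succModel (P := pFlood) (by decide) (by decide)
  exact
    { s := fun _ _ _ => hS _
      r := fun _ _ _ _ _ _ _ => hR _ _
      t := fun _ _ _ _ _ _ _ _ _ _ => hT _ _
      flood := fun _ _ _ => hFlood _
      s_end := fun _ _ => hS _
      g_init := fun _ _ _ _ _ => hG _
      g_step := fun _ _ _ _ _ _ _ _ => hG _
      flood_gen := fun _ _ _ _ _ _ => ⟨hG _, fun _ _ => ⟨hR _ _, hT _ _⟩⟩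
      ex := fun y _ _ _ => ⟨succTerm y, ⟨by simp [pS0, pEnd], fun _ => ⟨y, rfl⟩⟩, hR _ _,
        fun _ _ => hT _ _⟩ }

lemma isModel_succModel (M : TCM) : IsModel (RM M) {(pEnd, [wC])} succModel := by
  refine ⟨satisfiesRule_RM_iff_rmClosed.2 (rmClosed_succModel M), fun _ => wC, ?_⟩
  rintro _ rfl
  exact ⟨fun _ => rfl, fun h => absurd h (by decide)⟩

lemma apply_eq_iterate_succTerm {M : TCM} {U : Set Atom} {τ : Subst} (hτ : IsHomOn τ U succModel)
    {x : ℕ → FTerm} (h0 : x 0 = wC) (hx : ∀ n, IsChild M U (x (n + 1)) (x n)) (n : ℕ) :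
    applyT τ (x n) = succTerm^[n] wC := by
  induction n with
  | zero => rw [h0]; rfl
  | succ n ih =>
    obtain ⟨t, ht⟩ := (hτ _ (hx n).1).2 rfl
    simp only [applyA, List.map_cons, List.map_nil, List.cons.injEq, and_true] at ht
    rw [Function.iterate_succ_apply', ← ih, ht.1, ht.2]

lemma iterate_succTerm_wC (n : ℕ) : succTerm^[n + 1] wC = vt n := by
  induction n with
  | zero => rfl
  | succ n ih => rw [Function.iterate_succ_apply', ih]; rfl

lemma not_isBts_RM_of_not_halts {M : TCM} (hM : ¬ M.Halts) : ¬ IsBts (RM M) := by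
  intro h
  obtain ⟨k, U, ⟨⟨hsat, σ, hσ⟩, huniv⟩, htw⟩ := h {(pEnd, [wC])}
  have hU : RMClosed M U := satisfiesRule_RM_iff_rmClosed.1 hsat
  have hE : (pEnd, [wC]) ∈ U := isHomOn_singleton.1 hσ
  obtain ⟨x, h0, hx⟩ := hU.exists_seq_isChild hM hE
  obtain ⟨τ, hτ⟩ := huniv succModel (by simpa using isModel_succModel M)
  have hinj : Function.Injective fun n => x (n + 1) := by
    intro a b hab
    have hvt : vt a = vt b := by
      rw [← iterate_succTerm_wC, ← iterate_succTerm_wC, ← apply_eq_iterate_succTerm hτ h0 hx,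
        ← apply_eq_iterate_succTerm hτ h0 hx]
      exact congrArg _ hab
    simpa [vt] using hvt
  have hflood (n : ℕ) : (pFlood, [x n]) ∈ U := hU.flood _ _ (hU.s _ _ (hx n).1)
  refine Set.infinite_range_of_injective hinj (htw.finite_of_clique ?_)
  rintro _ ⟨a, rfl⟩ _ ⟨b, rfl⟩
  exact ⟨_, (hU.flood_gen _ _ _ (hflood (a + 1)) (hflood (b + 1)) (hflood 0)).1, by simp, by simp⟩

/-! ### Halting machines -/

section SkolemChase

variable {M : TCM} {I J : Set Atom} {τ : Subst} {K : ℕ}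

/-- The null introduced for a term `t` by rule (9). Instances are assumed to use only constants and
ordinary variables; the `(k+1)`-st iterated null above such a term `c` is the fresh variable
`(encode c, k)`. -/
def nullOf : FTerm → FTerm
  | Sum.inr (Sum.inr (a, k)) => Sum.inr (Sum.inr (a, k + 1))
  | t => Sum.inr (Sum.inr (Encodable.encode t, 0))

/-- The number of times `nullOf` was applied to obtain a term. -/
def level : FTerm → ℕ
  | Sum.inr (Sum.inr (_, k)) => k + 1
  | _ => 0

lemma level_nullOf (t : FTerm) : level (nullOf t) = level t + 1 := by
  rcases t with c | n | ⟨a, k⟩ <;> rfl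

/-- `J` satisfies every rule of `R_M`, with rule (9) witnessed by `nullOf`. -/
def SkolemClosed (M : TCM) (J : Set Atom) : Prop :=
  RMClosed M J ∧ ∀ y z, (pG, [y, z]) ∈ J → (pEnd, [z]) ∈ J → IsChild M J (nullOf y) y

/-- The Skolem chase of `⟨R_M, I⟩`. -/
def skolemChase (M : TCM) (I : Set Atom) : Set Atom := ⋂₀ {J | SkolemClosed M J ∧ I ⊆ J}

lemma subset_skolemChase : I ⊆ skolemChase M I := Set.subset_sInter fun _ hJ => hJ.2

lemma skolemChase_subset (hJ : SkolemClosed M J) (hI : I ⊆ J) : skolemChase M I ⊆ J :=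
  Set.sInter_subset_of_mem ⟨hJ, hI⟩

lemma SPath.map {h : FTerm → FTerm} (hIJ : ∀ x y, (pS, [x, y]) ∈ I → (pS, [h x, h y]) ∈ J) {n : ℕ}
    {s t : FTerm} (hst : SPath I n s t) : SPath J n (h s) (h t) := by
  induction n generalizing s with
  | zero => exact congrArg h hst
  | succ n ih =>
    obtain ⟨u, hsu, hut⟩ := hst
    exact ⟨h u, hIJ _ _ hsu, ih hut⟩

lemma rmClosed_skolemChase (M : TCM) (I : Set Atom) : RMClosed M (skolemChase M I) where
  s _ _ h J hJ := hJ.1.1.s _ _ (h J hJ)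
  r i hi _ _ _ hR hS J hJ := hJ.1.1.r i hi _ _ _ (hR J hJ) (hS J hJ)
  t i hi _ _ _ _ _ hT hy hz J hJ := hJ.1.1.t i hi _ _ _ _ _ (hT J hJ)
    (SPath.map (h := id) (fun _ _ hS => Set.mem_sInter.1 hS J hJ) hy)
    (SPath.map (h := id) (fun _ _ hS => Set.mem_sInter.1 hS J hJ) hz)
  flood _ _ h J hJ := hJ.1.1.flood _ _ (h J hJ)
  s_end _ h J hJ := hJ.1.1.s_end _ (h J hJ)
  g_init _ _ _ hxy hyz J hJ := hJ.1.1.g_init _ _ _ (hxy J hJ) (hyz J hJ)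
  g_step i hi _ _ _ hG hR hT J hJ := hJ.1.1.g_step i hi _ _ _ (hG J hJ) (hR J hJ) (hT J hJ)
  flood_gen _ _ _ hx hy hz :=
    ⟨fun J hJ => (hJ.1.1.flood_gen _ _ _ (hx J hJ) (hy J hJ) (hz J hJ)).1, fun j hj =>
      ⟨fun J hJ => ((hJ.1.1.flood_gen _ _ _ (hx J hJ) (hy J hJ) (hz J hJ)).2 j hj).1,
        fun J hJ => ((hJ.1.1.flood_gen _ _ _ (hx J hJ) (hy J hJ) (hz J hJ)).2 j hj).2⟩⟩
  ex y _ hG hE := ⟨nullOf y, fun J hJ => (hJ.1.2 _ _ (hG J hJ) (hE J hJ)).1,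
    fun J hJ => (hJ.1.2 _ _ (hG J hJ) (hE J hJ)).2.1,
    fun j hj J hJ => (hJ.1.2 _ _ (hG J hJ) (hE J hJ)).2.2 j hj⟩

lemma RMClosed.skolemClosed_preimage (hJ : RMClosed M J) {h : FTerm → FTerm}
    (hnull : ∀ y, (∃ x, IsChild M J x (h y)) → IsChild M J (h (nullOf y)) (h y)) :
    SkolemClosed M {a | (a.1, a.2.map h) ∈ J} := by
  have hex (y z : FTerm) (hG : (pG, [h y, h z]) ∈ J) (hE : (pEnd, [h z]) ∈ J) :
      IsChild M J (h (nullOf y)) (h y) := hnull y (hJ.ex _ _ hG hE)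
  exact ⟨{
    s := fun _ _ => hJ.s _ _
    r := fun i hi _ _ _ => hJ.r i hi _ _ _
    t := fun i hi _ _ _ _ _ hT hy hz => hJ.t i hi _ _ _ _ _ hT
      (SPath.map (h := h) (fun _ _ hS => hS) hy) (SPath.map (h := h) (fun _ _ hS => hS) hz)
    flood := fun _ _ => hJ.flood _ _
    s_end := fun _ => hJ.s_end _
    g_init := fun _ _ _ => hJ.g_init _ _ _
    g_step := fun i hi _ _ _ => hJ.g_step i hi _ _ _
    flood_gen := fun _ _ _ => hJ.flood_gen _ _ _
    ex := fun y z hG hE => ⟨nullOf y, hex y z hG hE⟩ }, hex⟩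

/-- Extends a homomorphism defined on constants and ordinary variables to all terms, sending the
iterated nulls above `c` to the iterates of `child` at the image of `c`. -/
def extendHom (child : FTerm → FTerm) (τ : Subst) : FTerm → FTerm
  | Sum.inl c => Sum.inl c
  | Sum.inr (Sum.inl n) => τ (Sum.inl n)
  | Sum.inr (Sum.inr (a, k)) =>
      child^[k + 1] (applyT τ ((Encodable.decode (α := FTerm) a).getD wC))

lemma extendHom_nullOf (child : FTerm → FTerm) (τ : Subst) (t : FTerm) :
    extendHom child τ (nullOf t) = child (extendHom child τ t) := by
  rcases t with c | n | ⟨a, k⟩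
  · simp only [nullOf, extendHom, Encodable.encodek]; rfl
  · simp only [nullOf, extendHom, Encodable.encodek]; rfl
  · exact Function.iterate_succ_apply' child (k + 1) _

lemma extendHom_eq_applyT (child : FTerm → FTerm) (τ : Subst) {t : FTerm} (ht : level t = 0) :
    extendHom child τ t = applyT τ t := by
  rcases t with c | n | ⟨a, k⟩
  exacts [rfl, rfl, absurd ht k.succ_ne_zero]

lemma homBetween_skolemChase (hI : ∀ t ∈ adom I, level t = 0) (hJ : RMClosed M J)
    (hτ : IsHomOn τ I J) : HomBetween (skolemChase M I) J := by
  let child (y : FTerm) : FTerm := if hy : ∃ x, IsChild M J x y then hy.choose else y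
  let h : FTerm → FTerm := extendHom child τ
  have hnull (y : FTerm) (hy : ∃ x, IsChild M J x (h y)) : IsChild M J (h (nullOf y)) (h y) := by
    have hchild : child (h y) = hy.choose := dif_pos hy
    simpa only [h, extendHom_nullOf, hchild] using hy.choose_spec
  have hbase : I ⊆ {a | (a.1, a.2.map h) ∈ J} := by
    intro a ha
    have hmap : a.2.map h = a.2.map (applyT τ) :=
      List.map_congr_left fun t ht => extendHom_eq_applyT child τ (hI t ⟨a, ha, ht⟩)
    rw [Set.mem_ofPred_eq, hmap]
    exact hτ a ha
  refine ⟨fun v => h (Sum.inr v), fun a ha => ?_⟩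
  have happly : applyT (fun v => h (Sum.inr v)) = h := by
    funext t
    rcases t with c | v <;> rfl
  rw [applyA, happly]
  exact skolemChase_subset (hJ.skolemClosed_preimage hnull) hbase ha

/-- `t` is obtained by at most `K` applications of `nullOf` from a term of the instance `I`. -/
def InChain (I : Set Atom) (K : ℕ) (t : FTerm) : Prop :=
  level t ≤ K ∧ ∃ c ∈ adom I, t = nullOf^[level t] c

/-- The bounds on levels that hold for the atoms of the Skolem chase if `M.Gset` is bounded by `K`.
At a term of level `K`, the relations `R_i`, `T_i` and `G` are constrained as on a chain of nulls
that has not yet been flooded. -/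
def LevelSpec (M : TCM) (K : ℕ) : Atom → Prop
  | (P, [x]) => (P = pEnd → level x = 0) ∧ (P = pFlood → level x < K)
  | (P, [x, y]) => (P = pS0 ∨ P = pS → level y = level x - 1) ∧
      (∀ i, P = pR i → level x = K → ∃ n, level y = K - n ∧ i = n % M.p) ∧
      (P = pG → level x = K → ∃ n ∈ M.Gset, level y = K - n)
  | (P, [x, y, z]) => ∀ i, P = pT i → level x = K →
      ∃ b, level y = K - b * M.ri i ∧ level z = K - b * M.qi i
  | _ => True

/-- The largest atom set over the chains of nulls of length at most `K` that obeys `LevelSpec`. -/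
def levelModel (M : TCM) (I : Set Atom) (K : ℕ) : Set Atom :=
  {a | (∀ t ∈ a.2, InChain I K t) ∧ LevelSpec M K a}

lemma mem_levelModel_pEnd {x : FTerm} :
    (pEnd, [x]) ∈ levelModel M I K ↔ InChain I K x ∧ level x = 0 := by
  simp [-Sum.forall, levelModel, LevelSpec, pEnd, pFlood]

lemma mem_levelModel_pFlood {x : FTerm} :
    (pFlood, [x]) ∈ levelModel M I K ↔ InChain I K x ∧ level x < K := by
  simp [-Sum.forall, levelModel, LevelSpec, pEnd, pFlood]

lemma mem_levelModel_pS0 {x y : FTerm} : (pS0, [x, y]) ∈ levelModel M I K ↔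
    (InChain I K x ∧ InChain I K y) ∧ level y = level x - 1 := by
  have hR (i : ℕ) : pS0 ≠ pR i := by simp only [pS0, pR]; omega
  simp [-Sum.forall, levelModel, LevelSpec, hR, show pS0 ≠ pG by decide]

lemma mem_levelModel_pS {x y : FTerm} : (pS, [x, y]) ∈ levelModel M I K ↔
    (InChain I K x ∧ InChain I K y) ∧ level y = level x - 1 := by
  have hR (i : ℕ) : pS ≠ pR i := by simp only [pS, pR]; omega
  simp [-Sum.forall, levelModel, LevelSpec, hR, show pS ≠ pG by decide]

lemma mem_levelModel_pG {x y : FTerm} : (pG, [x, y]) ∈ levelModel M I K ↔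
    (InChain I K x ∧ InChain I K y) ∧ (level x = K → ∃ n ∈ M.Gset, level y = K - n) := by
  have hR (i : ℕ) : pG ≠ pR i := by simp only [pG, pR]; omega
  simp [-Sum.forall, levelModel, LevelSpec, hR, show pG ≠ pS by decide, show pG ≠ pS0 by decide]

lemma mem_levelModel_pR {i : ℕ} {x y : FTerm} : (pR i, [x, y]) ∈ levelModel M I K ↔
    (InChain I K x ∧ InChain I K y) ∧ (level x = K → ∃ n, level y = K - n ∧ i = n % M.p) := by
  have hS0 : pR i ≠ pS0 := by simp only [pS0, pR]; omega
  have hS : pR i ≠ pS := by simp only [pS, pR]; omega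
  have hG : pR i ≠ pG := by simp only [pG, pR]; omega
  have hR (j : ℕ) : pR i = pR j ↔ i = j := by simp only [pR]; omega
  simp [-Sum.forall, levelModel, LevelSpec, hS0, hS, hG, hR]

lemma mem_levelModel_pT {i : ℕ} {x y z : FTerm} : (pT i, [x, y, z]) ∈ levelModel M I K ↔
    (InChain I K x ∧ InChain I K y ∧ InChain I K z) ∧
      (level x = K → ∃ b, level y = K - b * M.ri i ∧ level z = K - b * M.qi i) := by
  have hT (j : ℕ) : pT i = pT j ↔ i = j := by simp only [pT]; omega
  simp [-Sum.forall, levelModel, LevelSpec, hT]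

lemma subset_levelModel (hK : 0 < K) (hI : ∀ t ∈ adom I, level t = 0) :
    I ⊆ levelModel M I K := by
  rintro ⟨P, ts⟩ ha
  have hts (t : FTerm) (ht : t ∈ ts) : level t = 0 := hI t ⟨_, ha, ht⟩
  refine ⟨fun t ht => ⟨by simp [hts t ht], t, ⟨_, ha, ht⟩, by simp [hts t ht]⟩, ?_⟩
  match ts with
  | [] => trivial
  | [x] => simp [LevelSpec, hts, hK]
  | [x, y] => simp [LevelSpec, hts, hK.ne]
  | [x, y, z] => simp [LevelSpec, hts, hK.ne]
  | _ :: _ :: _ :: _ :: _ => trivial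

lemma SPath.level_eq_sub {n : ℕ} {s t : FTerm} (hst : SPath (levelModel M I K) n s t)
    (hs : InChain I K s) : InChain I K t ∧ level t = level s - n := by
  induction n generalizing s with
  | zero => exact hst ▸ ⟨hs, rfl⟩
  | succ n ih =>
    obtain ⟨u, hsu, hut⟩ := hst
    obtain ⟨⟨-, hu⟩, hlevel⟩ := mem_levelModel_pS.1 hsu
    exact ⟨(ih hut hu).1, by rw [(ih hut hu).2, hlevel]; omega⟩

lemma t_mem_levelModel {i : ℕ} {x y z y' z' : FTerm} (hT : (pT i, [x, y, z]) ∈ levelModel M I K)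
    (hy : SPath (levelModel M I K) (M.ri i) y y') (hz : SPath (levelModel M I K) (M.qi i) z z') :
    (pT i, [x, y', z']) ∈ levelModel M I K := by
  obtain ⟨⟨hxc, hyc, hzc⟩, hT⟩ := mem_levelModel_pT.1 hT
  obtain ⟨hyc', hy'⟩ := hy.level_eq_sub hyc
  obtain ⟨hzc', hz'⟩ := hz.level_eq_sub hzc
  refine mem_levelModel_pT.2 ⟨⟨hxc, hyc', hzc'⟩, fun hx => ?_⟩
  obtain ⟨b, hyb, hzb⟩ := hT hx
  exact ⟨b + 1, by rw [hy', hyb, Nat.sub_sub, Nat.succ_mul],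
    by rw [hz', hzb, Nat.sub_sub, Nat.succ_mul]⟩

lemma InChain.nullOf {t : FTerm} (ht : InChain I K t) (hlt : level t < K) :
    InChain I K (nullOf t) := by
  obtain ⟨-, c, hc, hct⟩ := ht
  refine ⟨by rwa [level_nullOf], c, hc, ?_⟩
  rw [level_nullOf, Function.iterate_succ_apply', ← hct]

lemma g_step_mem_levelModel (hK : ∀ n ∈ M.Gset, n < K) {i : ℕ} {x y z : FTerm}
    (hG : (pG, [x, y]) ∈ levelModel M I K) (hR : (pR i, [x, y]) ∈ levelModel M I K)
    (hT : (pT i, [x, y, z]) ∈ levelModel M I K) : (pG, [x, z]) ∈ levelModel M I K := by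
  refine mem_levelModel_pG.2
    ⟨⟨(mem_levelModel_pG.1 hG).1.1, (mem_levelModel_pT.1 hT).1.2.2⟩, fun hx => ?_⟩
  obtain ⟨n, hn, hyn⟩ := (mem_levelModel_pG.1 hG).2 hx
  obtain ⟨n', hyn', rfl⟩ := (mem_levelModel_pR.1 hR).2 hx
  obtain ⟨b, hyb, hzb⟩ := (mem_levelModel_pT.1 hT).2 hx
  have hnK := hK n hn
  obtain rfl : n' = n := by omega
  have hnb : n' = b * M.ri (n' % M.p) := by omega
  have hg : M.g n' = b * M.qi (n' % M.p) := by
    refine Nat.div_eq_of_eq_mul_left (M.qr_pos _).2 ?_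
    calc M.qi (n' % M.p) * n' = M.qi (n' % M.p) * (b * M.ri (n' % M.p)) :=
          congrArg (M.qi (n' % M.p) * ·) hnb
      _ = b * M.qi (n' % M.p) * M.ri (n' % M.p) := by ring
  obtain ⟨k, rfl⟩ := hn
  exact ⟨M.g (M.gIter k), ⟨k + 1, M.gIter_succ k⟩, by rw [hg, hzb]⟩

lemma flood_gen_mem_levelModel {x y z : FTerm} (hx : (pFlood, [x]) ∈ levelModel M I K)
    (hy : (pFlood, [y]) ∈ levelModel M I K) (hz : (pFlood, [z]) ∈ levelModel M I K) :
    (pG, [x, y]) ∈ levelModel M I K ∧ ∀ j < M.p,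
      (pR j, [x, y]) ∈ levelModel M I K ∧ (pT j, [x, y, z]) ∈ levelModel M I K := by
  rw [mem_levelModel_pFlood] at hx hy hz
  have hne : level x ≠ K := hx.2.ne
  exact ⟨mem_levelModel_pG.2 ⟨⟨hx.1, hy.1⟩, fun h => absurd h hne⟩, fun j _ =>
    ⟨mem_levelModel_pR.2 ⟨⟨hx.1, hy.1⟩, fun h => absurd h hne⟩,
      mem_levelModel_pT.2 ⟨⟨hx.1, hy.1, hz.1⟩, fun h => absurd h hne⟩⟩⟩

lemma isChild_nullOf_levelModel (hK : ∀ n ∈ M.Gset, n < K) {y z : FTerm}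
    (hG : (pG, [y, z]) ∈ levelModel M I K) (hE : (pEnd, [z]) ∈ levelModel M I K) :
    IsChild M (levelModel M I K) (nullOf y) y := by
  rw [mem_levelModel_pG] at hG
  rw [mem_levelModel_pEnd] at hE
  have hy : InChain I K y := hG.1.1
  have hlt : level y < K := by
    refine hy.1.lt_of_ne fun hyK => ?_
    obtain ⟨n, hn, hzn⟩ := hG.2 hyK
    have hnK := hK n hn
    rw [hE.2] at hzn
    omega
  have hnull : InChain I K (nullOf y) := hy.nullOf hlt
  exact ⟨mem_levelModel_pS0.2 ⟨⟨hnull, hy⟩, by rw [level_nullOf, Nat.add_sub_cancel]⟩,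
    mem_levelModel_pR.2 ⟨⟨hnull, hnull⟩, fun h => ⟨0, h, (Nat.zero_mod _).symm⟩⟩,
    fun j _ => mem_levelModel_pT.2 ⟨⟨hnull, hnull, hnull⟩, fun h => ⟨0, by simp [h], by simp [h]⟩⟩⟩

lemma skolemClosed_levelModel (hK : ∀ n ∈ M.Gset, n < K) :
    SkolemClosed M (levelModel M I K) := by
  refine ⟨?_, fun y z => isChild_nullOf_levelModel hK⟩
  constructor
  case s => exact fun x y h => mem_levelModel_pS.2 (mem_levelModel_pS0.1 h)
  case r =>
    intro i _ x y z hR hS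
    refine mem_levelModel_pR.2
      ⟨⟨(mem_levelModel_pR.1 hR).1.1, (mem_levelModel_pS.1 hS).1.2⟩, fun hx => ?_⟩
    obtain ⟨n, hyn, rfl⟩ := (mem_levelModel_pR.1 hR).2 hx
    exact ⟨n + 1, by rw [(mem_levelModel_pS.1 hS).2, hyn, Nat.sub_sub], Nat.mod_add_mod _ _ _⟩
  case t => exact fun i _ x y z y' z' => t_mem_levelModel
  case flood =>
    intro x y h
    obtain ⟨⟨hx, hy⟩, hlevel⟩ := mem_levelModel_pS.1 h
    have h2K : 2 < K := hK 2 ⟨0, rfl⟩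
    have hxK := hx.1
    exact mem_levelModel_pFlood.2 ⟨hy, by omega⟩
  case s_end =>
    intro x h
    obtain ⟨hx, hlevel⟩ := mem_levelModel_pEnd.1 h
    exact mem_levelModel_pS.2 ⟨⟨hx, hx⟩, by rw [hlevel]⟩
  case g_init =>
    intro x y z hxy hyz
    obtain ⟨⟨hx, -⟩, hy⟩ := mem_levelModel_pS.1 hxy
    obtain ⟨⟨-, hz⟩, hzy⟩ := mem_levelModel_pS.1 hyz
    exact mem_levelModel_pG.2 ⟨⟨hx, hz⟩, fun hK => ⟨2, ⟨0, rfl⟩, by rw [hzy, hy, hK, Nat.sub_sub]⟩⟩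
  case g_step => exact fun i _ x y z => g_step_mem_levelModel hK
  case flood_gen => exact fun x y z => flood_gen_mem_levelModel
  case ex => exact fun y z hG hE => ⟨nullOf y, isChild_nullOf_levelModel hK hG hE⟩

lemma finite_adom_skolemChase (hK : ∀ n ∈ M.Gset, n < K) (hI : ∀ t ∈ adom I, level t = 0)
    (hfin : (adom I).Finite) : (adom (skolemChase M I)).Finite := by
  refine ((hfin.prod (Set.finite_Iic K)).image fun q => nullOf^[q.2] q.1).subset ?_
  rintro t ⟨a, ha, ht⟩
  have hsub : skolemChase M I ⊆ levelModel M I K :=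
    skolemChase_subset (skolemClosed_levelModel hK)
      (subset_levelModel (Nat.zero_lt_of_lt (hK 2 ⟨0, rfl⟩)) hI)
  obtain ⟨hlevel, c, hc, htc⟩ := (hsub ha).1 t ht
  exact ⟨(c, level t), ⟨hc, hlevel⟩, htc.symm⟩

end SkolemChase

/-- Renames every variable to an ordinary one, so that no fresh variable occurs in an instance. -/
def toOrdinary : Subst := fun v => vt (Encodable.encode v)

/-- The inverse of `toOrdinary`. -/
def ofOrdinary : Subst
  | Sum.inl n => Sum.inr ((Encodable.decode (α := Var) n).getD (Sum.inl 0))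
  | Sum.inr v => Sum.inr (Sum.inr v)

lemma applyT_ofOrdinary_toOrdinary (t : FTerm) :
    applyT ofOrdinary (applyT toOrdinary t) = t := by
  rcases t with c | v
  · rfl
  · simp [applyT, toOrdinary, vt, ofOrdinary]

lemma level_applyT_toOrdinary (t : FTerm) : level (applyT toOrdinary t) = 0 := by
  rcases t with c | v <;> rfl

lemma finite_adom (I : Finset Atom) (σ : Subst) : (adom (applyA σ '' I)).Finite := by
  have hadom : adom (applyA σ '' I) = ⋃ a ∈ applyA σ '' I, {t | t ∈ a.2} := by
    ext t
    simp [adom]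
  rw [hadom]
  exact (I.finite_toSet.image _).biUnion fun a _ => List.finite_toSet a.2

lemma isBts_RM_of_halts {M : TCM} (hM : M.Halts) : IsBts (RM M) := by
  intro I
  obtain ⟨B, hB⟩ := hM.exists_gIter_lt
  set I' : Set Atom := applyA toOrdinary '' (I : Set Atom)
  have hlevel : ∀ t ∈ adom I', level t = 0 := by
    rintro _ ⟨_, ⟨a, _, rfl⟩, ht⟩
    obtain ⟨s, -, rfl⟩ := List.mem_map.1 ht
    exact level_applyT_toOrdinary s
  obtain ⟨k, hk⟩ := exists_treewidthAtMost_of_finite_adom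
    (finite_adom_skolemChase (Set.forall_mem_range.2 hB) hlevel (finite_adom I toOrdinary))
  refine ⟨k, skolemChase M I', ⟨⟨satisfiesRule_RM_iff_rmClosed.2 (rmClosed_skolemChase M I'),
    toOrdinary, fun a ha => subset_skolemChase ⟨a, ha, rfl⟩⟩, ?_⟩, hk⟩
  rintro J ⟨hsat, τ, hτ⟩
  have hτ' : IsHomOn (fun v => applyT τ (ofOrdinary v)) I' J := by
    rintro _ ⟨a, ha, rfl⟩
    have happly (t : FTerm) :
        applyT (fun v => applyT τ (ofOrdinary v)) (applyT toOrdinary t) = applyT τ t := by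
      conv_rhs => rw [← applyT_ofOrdinary_toOrdinary t]
      generalize applyT toOrdinary t = s
      rcases s with c | v <;> rfl
    simpa only [applyA, List.map_map, Function.comp_def, happly] using hτ a ha
  exact homBetween_skolemChase hlevel (satisfiesRule_RM_iff_rmClosed.1 hsat) hτ'

lemma isBts_RM_iff_halts (M : TCM) : IsBts (RM M) ↔ M.Halts :=
  ⟨fun h => by_contra fun hM => not_isBts_RM_of_not_halts hM h, isBts_RM_of_halts⟩

/-! ### Loop programs -/

/-- Programs over registers indexed by `ℕ`. The program `loop r P` is
`while r ≠ 0 do r := r - 1; P`; it may diverge, since `P` may change `r`. -/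
inductive Prog : Type
  | skip : Prog
  | inc : ℕ → Prog
  | seq : Prog → Prog → Prog
  | loop : ℕ → Prog → Prog

namespace Prog

/-- Big-step semantics: started in the register contents `s`, the program terminates in `s'`. -/
inductive Eval : Prog → (ℕ → ℕ) → (ℕ → ℕ) → Prop
  | skip (s) : Eval .skip s s
  | inc (r s) : Eval (.inc r) s (Function.update s r (s r + 1))
  | seq {P Q s s' s''} : Eval P s s' → Eval Q s' s'' → Eval (.seq P Q) s s''
  | loop_zero {r P s} : s r = 0 → Eval (.loop r P) s s
  | loop_succ {r P s s' s''} : s r ≠ 0 → Eval P (Function.update s r (s r - 1)) s' →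
      Eval (.loop r P) s' s'' → Eval (.loop r P) s s''

lemma Eval.cast {P : Prog} {s s' t t' : ℕ → ℕ} (h : Eval P s s') (hs : t = s) (hs' : s' = t') :
    Eval P t t' := by
  subst hs hs'
  exact h

lemma eval_clear (r : ℕ) (s : ℕ → ℕ) : Eval (.loop r .skip) s (Function.update s r 0) := by
  generalize hk : s r = k
  induction k generalizing s with
  | zero => exact (Eval.loop_zero hk).cast rfl (by rw [← hk, Function.update_eq_self])
  | succ k ih =>
    refine Eval.loop_succ (by omega) (Eval.skip _) ((ih _ ?_).cast rfl ?_)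
    · simp [hk]
    · rw [Function.update_idem]

lemma eval_move {a b : ℕ} (hab : a ≠ b) (s : ℕ → ℕ) :
    Eval (.loop a (.inc b)) s (Function.update (Function.update s b (s b + s a)) a 0) := by
  generalize hk : s a = k
  induction k generalizing s with
  | zero =>
    refine (Eval.loop_zero hk).cast rfl ?_
    funext x; simp only [Function.update_apply]; grind
  | succ k ih =>
    refine Eval.loop_succ (by omega) (Eval.inc _ _) ((ih _ ?_).cast rfl ?_)
    · simp only [Function.update_apply]; grind
    · funext x; simp only [Function.update_apply]; grind

lemma eval_move_two {a b t : ℕ} (hab : a ≠ b) (hat : a ≠ t) (hbt : b ≠ t) (s : ℕ → ℕ) :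
    Eval (.loop a (.seq (.inc b) (.inc t))) s
      (Function.update (Function.update (Function.update s b (s b + s a)) t (s t + s a)) a 0) := by
  generalize hk : s a = k
  induction k generalizing s with
  | zero =>
    refine (Eval.loop_zero hk).cast rfl ?_
    funext x; simp only [Function.update_apply]; grind
  | succ k ih =>
    refine Eval.loop_succ (by omega) (Eval.seq (Eval.inc _ _) (Eval.inc _ _))
      ((ih _ ?_).cast rfl ?_)
    · simp only [Function.update_apply]; grind
    · funext x; simp only [Function.update_apply]; grind

/-- Adds register `a` to register `b`, using `t` as a scratch register. -/
def copy (a b t : ℕ) : Prog := .seq (.loop a (.seq (.inc b) (.inc t))) (.loop t (.inc a))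

lemma eval_copy {a b t : ℕ} (hab : a ≠ b) (hat : a ≠ t) (hbt : b ≠ t) {s : ℕ → ℕ} (ht : s t = 0) :
    Eval (copy a b t) s (Function.update s b (s b + s a)) := by
  refine Eval.seq (eval_move_two hab hat hbt s) ((eval_move hat.symm _).cast rfl ?_)
  funext x; simp only [Function.update_apply]; grind

/-- `P` adds to the empty register `out` the value of `f` at the registers `ins`, provided that the
registers from `b` on are empty, and changes nothing else. -/
def Computes {n : ℕ} (P : Prog) (ins : Fin n → ℕ) (out b : ℕ) (f : List.Vector ℕ n → ℕ) : Prop :=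
  ∀ s : ℕ → ℕ, s out = 0 → (∀ r, b ≤ r → s r = 0) →
    Eval P s (Function.update s out (f (List.Vector.ofFn fun i => s (ins i))))

/-- `f` is computed by loop programs, for every choice of the registers. -/
def Computable {n : ℕ} (f : List.Vector ℕ n → ℕ) : Prop :=
  ∀ (ins : Fin n → ℕ) (out b : ℕ), (∀ i, ins i < b) → out < b → (∀ i, ins i ≠ out) →
    ∃ P : Prog, P.Computes ins out b f

lemma computable_zero : Computable (n := 0) fun _ => 0 := fun _ _ _ _ _ _ =>
  ⟨.skip, fun s hs _ => (Eval.skip s).cast rfl (Function.update_eq_self_iff.2 hs.symm).symm⟩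

lemma computable_get {n : ℕ} (i : Fin n) : Computable fun v : List.Vector ℕ n => v.get i := by
  intro ins out b hins hout hne
  refine ⟨copy (ins i) out b, fun s hs hb => ?_⟩
  refine (eval_copy (hne i) (hins i).ne hout.ne (hb b le_rfl)).cast rfl ?_
  simp only [hs, zero_add, List.Vector.get_ofFn]

lemma computable_succ : Computable (n := 1) fun v => Nat.succ v.head := by
  intro ins out b hins hout hne
  refine ⟨.seq (copy (ins 0) out b) (.inc out), fun s hs hb => ?_⟩
  refine Eval.seq (eval_copy (hne 0) (hins 0).ne hout.ne (hb b le_rfl))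
    ((Eval.inc _ _).cast rfl ?_)
  simp [hs]

/-- The contents `s` with the values `v 0, …, v (k - 1)` written to the registers from `b` on. -/
def setBlock (s : ℕ → ℕ) (b k : ℕ) (v : ℕ → ℕ) (r : ℕ) : ℕ :=
  if b ≤ r ∧ r < b + k then v (r - b) else s r

lemma setBlock_zero (s : ℕ → ℕ) (b : ℕ) (v : ℕ → ℕ) : setBlock s b 0 v = s := by
  funext r
  exact if_neg (by omega)

lemma setBlock_succ (s : ℕ → ℕ) (b k : ℕ) (v : ℕ → ℕ) :
    setBlock s b (k + 1) v = Function.update (setBlock s b k v) (b + k) (v k) := by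
  funext r
  simp only [setBlock, Function.update_apply]
  grind

lemma setBlock_of_lt {s : ℕ → ℕ} {b k : ℕ} {v : ℕ → ℕ} {r : ℕ} (hr : r < b) :
    setBlock s b k v r = s r := if_neg (by omega)

lemma setBlock_of_ge {s : ℕ → ℕ} {b k : ℕ} {v : ℕ → ℕ} {r : ℕ} (hr : b + k ≤ r) :
    setBlock s b k v r = s r := if_neg (by omega)

lemma setBlock_add {s : ℕ → ℕ} {b k : ℕ} {v : ℕ → ℕ} {j : ℕ} (hj : j < k) :
    setBlock s b k v (b + j) = v j := by
  rw [setBlock, if_pos (by omega), Nat.add_sub_cancel_left]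

lemma exists_eval_clearBlock (b k : ℕ) :
    ∃ P : Prog, ∀ s : ℕ → ℕ, Eval P s (setBlock s b k fun _ => 0) := by
  induction k with
  | zero => exact ⟨.skip, fun s => (Eval.skip s).cast rfl (setBlock_zero _ _ _).symm⟩
  | succ k ih =>
    obtain ⟨P, hP⟩ := ih
    exact ⟨.seq P (.loop (b + k) .skip), fun s =>
      Eval.seq (hP s) ((eval_clear _ _).cast rfl (setBlock_succ _ _ _ _).symm)⟩

lemma exists_eval_setBlock {m : ℕ} {g : ℕ → List.Vector ℕ m → ℕ} {k : ℕ}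
    (hg : ∀ j < k, Computable (g j)) {ins : Fin m → ℕ} {b : ℕ} (hins : ∀ i, ins i < b) :
    ∃ P : Prog, ∀ s : ℕ → ℕ, (∀ r, b ≤ r → s r = 0) →
      Eval P s (setBlock s b k fun j => g j (List.Vector.ofFn fun i => s (ins i))) := by
  induction k with
  | zero => exact ⟨.skip, fun s _ => (Eval.skip s).cast rfl (setBlock_zero _ _ _).symm⟩
  | succ k ih =>
    obtain ⟨P, hP⟩ := ih fun j hj => hg j (hj.trans k.lt_succ_self)
    obtain ⟨Q, hQ⟩ := hg k k.lt_succ_self ins (b + k) (b + k + 1)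
      (fun i => by have := hins i; omega) (by omega) (fun i => by have := hins i; omega)
    refine ⟨.seq P Q, fun s hs => Eval.seq (hP s hs) ((hQ _ ?_ fun r hr => ?_).cast rfl ?_)⟩
    · rw [setBlock_of_ge le_rfl, hs _ (by omega)]
    · rw [setBlock_of_ge (by omega), hs _ (by omega)]
    · simp only [setBlock_succ, setBlock_of_lt (hins _)]

lemma computable_comp {m n : ℕ} {f : List.Vector ℕ n → ℕ} {g : Fin n → List.Vector ℕ m → ℕ}
    (hf : Computable f) (hg : ∀ i, Computable (g i)) :
    Computable fun a => f (List.Vector.ofFn fun i => g i a) := by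
  intro ins out b hins hout _
  let g' (j : ℕ) (a : List.Vector ℕ m) : ℕ := if hj : j < n then g ⟨j, hj⟩ a else 0
  have hg' (i : Fin n) : g' i = g i := funext fun a => dif_pos i.2
  obtain ⟨P₁, hP₁⟩ := exists_eval_setBlock (g := g') (k := n)
    (fun j hj => (hg' ⟨j, hj⟩).symm ▸ hg ⟨j, hj⟩) hins
  obtain ⟨P₂, hP₂⟩ := hf (fun i => b + i) out (b + n) (fun i => by omega) (by omega)
    (fun i => by omega)
  obtain ⟨P₃, hP₃⟩ := exists_eval_clearBlock b n
  refine ⟨.seq P₁ (.seq P₂ P₃), fun s hs hb => Eval.seq (hP₁ s hb)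
    (Eval.seq (hP₂ _ ?_ fun r hr => ?_) ((hP₃ _).cast rfl ?_))⟩
  · rw [setBlock_of_lt hout, hs]
  · rw [setBlock_of_ge hr, hb r (by omega)]
  · simp only [setBlock_add (Fin.is_lt _), hg']
    funext r
    have hbr := hb r
    simp only [setBlock, Function.update_apply]
    grind

/-- The contents `s` with the loop counter `c`, the recursion index `y` and the accumulator `a` of
a primitive recursion in the registers `b`, `b + 1` and `b + 2`. -/
def precState (s : ℕ → ℕ) (b c y a : ℕ) : ℕ → ℕ :=
  Function.update (Function.update (Function.update s b c) (b + 1) y) (b + 2) a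

/-- The loop of a primitive recursion with step program `P`, whose result appears in register
`b + 3` and is then moved to the accumulator. -/
def precLoop (P : Prog) (b : ℕ) : Prog :=
  .loop b (.seq P (.seq (.loop (b + 2) .skip)
    (.seq (.loop (b + 3) (.inc (b + 2))) (.inc (b + 1)))))

section PrimitiveRecursion

variable {n : ℕ} {s : ℕ → ℕ} {b c y a : ℕ}

lemma precState_of_lt {r : ℕ} (hr : r < b) : precState s b c y a r = s r := by
  simp only [precState, Function.update_apply]
  grind

lemma precState_of_ge {r : ℕ} (hr : b + 3 ≤ r) : precState s b c y a r = s r := by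
  simp only [precState, Function.update_apply]
  grind

lemma precState_counter : precState s b c y a b = c := by
  simp [precState]

lemma precState_index : precState s b c y a (b + 1) = y := by
  simp [precState]

lemma precState_acc : precState s b c y a (b + 2) = a := by
  simp [precState]

lemma eval_precLoop {P : Prog} {g : List.Vector ℕ (n + 2) → ℕ} {ins : Fin n → ℕ}
    (hP : P.Computes (Fin.cons (b + 1) (Fin.cons (b + 2) ins)) (b + 3) (b + 4) g)
    (hins : ∀ i, ins i < b) (hs : ∀ r, b ≤ r → s r = 0) {F : ℕ → ℕ}
    (hF : ∀ j, F (j + 1) = g (j ::ᵥ F j ::ᵥ List.Vector.ofFn fun i => s (ins i))) (k j : ℕ) :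
    Eval (precLoop P b) (precState s b k j (F j)) (precState s b 0 (j + k) (F (j + k))) := by
  induction k generalizing j with
  | zero => exact Eval.loop_zero precState_counter
  | succ k ih =>
    have hargs : (List.Vector.ofFn fun i => precState s b k j (F j)
        ((Fin.cons (b + 1) (Fin.cons (b + 2) ins) : Fin (n + 2) → ℕ) i)) =
        j ::ᵥ F j ::ᵥ List.Vector.ofFn fun i => s (ins i) := by
      simp only [List.Vector.ofFn, Fin.cons_zero, Fin.cons_succ, precState_index, precState_acc,
        precState_of_lt (hins _)]
    have hzero (r : ℕ) (hr : b + 3 ≤ r) : precState s b k j (F j) r = 0 := by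
      rw [precState_of_ge hr, hs r (by omega)]
    have hstep := hP (precState s b k j (F j)) (hzero _ le_rfl) fun r hr => hzero r (by omega)
    rw [hargs, ← hF] at hstep
    have hdec : Function.update (precState s b (k + 1) j (F j)) b
        (precState s b (k + 1) j (F j) b - 1) = precState s b k j (F j) := by
      funext r
      simp only [precState, Function.update_apply]
      grind
    refine Eval.loop_succ (by rw [precState_counter]; omega) (Eval.seq (hstep.cast hdec rfl)
      (Eval.seq (eval_clear _ _) (Eval.seq (eval_move (by omega) _) (Eval.inc _ _))))
      ((ih (j + 1)).cast ?_ ?_)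
    · funext r
      have hr := hzero r
      simp only [precState, Function.update_apply] at hr ⊢
      grind
    · rw [show j + 1 + k = j + (k + 1) by omega]

lemma computable_prec {f : List.Vector ℕ n → ℕ} {g : List.Vector ℕ (n + 2) → ℕ}
    (hf : Computable f) (hg : Computable g) : Computable fun v : List.Vector ℕ (n + 1) =>
      v.head.rec (f v.tail) fun y IH => g (y ::ᵥ IH ::ᵥ v.tail) := by
  intro ins out b hins hout _
  have hins' (i : Fin n) : ins i.succ < b := hins i.succ
  obtain ⟨Pf, hPf⟩ := hf (fun i => ins i.succ) (b + 2) (b + 4) (fun i => by have := hins' i; omega)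
    (by omega) (fun i => by have := hins' i; omega)
  have hcons (i : Fin (n + 2)) :
      (Fin.cons (b + 1) (Fin.cons (b + 2) fun i => ins i.succ) : Fin (n + 2) → ℕ) i < b + 3 := by
    refine Fin.cases (by simp) (Fin.cases (by simp) fun i => ?_) i
    exact (hins' i).trans (by omega)
  obtain ⟨Pg, hPg⟩ := hg (Fin.cons (b + 1) (Fin.cons (b + 2) fun i => ins i.succ)) (b + 3) (b + 4)
    (fun i => (hcons i).trans (by omega)) (by omega) (fun i => (hcons i).ne)
  refine ⟨.seq (copy (ins 0) b (b + 3)) (.seq Pf (.seq (precLoop Pg b)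
    (.seq (.loop (b + 1) .skip) (.loop (b + 2) (.inc out))))), fun s hs hb => ?_⟩
  let F (k : ℕ) : ℕ := k.rec (f (List.Vector.ofFn fun i => s (ins i.succ)))
    fun y IH => g (y ::ᵥ IH ::ᵥ List.Vector.ofFn fun i => s (ins i.succ))
  have hzero (c r : ℕ) (hr : b + 2 ≤ r) : precState s b c 0 0 r = 0 := by
    rcases hr.eq_or_lt with rfl | hr
    exacts [precState_acc, (precState_of_ge hr).trans (hb r (by omega))]
  have hinit := hPf (precState s b (s (ins 0)) 0 0) (hzero _ _ le_rfl) fun r hr =>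
    hzero _ r (by omega)
  simp only [precState_of_lt (hins' _)] at hinit
  refine Eval.seq (eval_copy (hins 0).ne (by have := hins 0; omega) (by omega) (hb _ (by omega)))
    (Eval.seq (hinit.cast ?_ rfl) (Eval.seq ((eval_precLoop hPg hins' hb (F := F) (fun _ => rfl)
      (s (ins 0)) 0).cast ?_ rfl) (Eval.seq (eval_clear _ _)
        ((eval_move (by omega) _).cast rfl ?_))))
  · funext r
    have hr := hb r
    simp only [precState, Function.update_apply]
    grind
  · exact Function.update_idem _ _ _
  · change _ = Function.update s out (F (s (ins 0)))
    rw [zero_add]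
    funext r
    have hr := hb r
    simp only [precState, Function.update_apply]
    grind

end PrimitiveRecursion

lemma computable_of_primrec' {n : ℕ} {f : List.Vector ℕ n → ℕ} (hf : Nat.Primrec' f) :
    Computable f := by
  induction hf with
  | zero => exact computable_zero
  | succ => exact computable_succ
  | get i => exact computable_get i
  | comp _ _ _ ihf ihg => exact computable_comp ihf ihg
  | prec _ _ ihf ihg => exact computable_prec ihf ihg

end Prog

/-! ### Compiling loop programs to counter machines -/

namespace TCM

/-- A step of `M` from state and counters `x` to `y`, at any value of the time counter. -/
def Move (M : TCM) (x y : ℕ × ℕ × ℕ) : Prop :=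
  ∀ t, M.next (x.1, x.2.1, x.2.2, t) = some (y.1, y.2.1, y.2.2, t + 1)

/-- `M` gets from state and counters `x` to `y`. -/
def Reaches (M : TCM) : ℕ × ℕ × ℕ → ℕ × ℕ × ℕ → Prop := Relation.ReflTransGen M.Move

/-- From state `q` on, the transition table of `M` has the `n` rows `row 0, …, row (n - 1)`, in
which target states are given relative to `q`. -/
def HasRows (M : TCM) (q n : ℕ) (row : ℕ → Bool → Bool → ℕ × ℤ × ℤ) : Prop :=
  ∀ j < n, ∀ b₁ b₂, M.step (q + j) b₁ b₂ = some (q + (row j b₁ b₂).1, (row j b₁ b₂).2)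

variable {M : TCM}

lemma move_of_step {q a c q' a' c' : ℕ} {d₁ d₂ : ℤ}
    (h : M.step q (decide (a ≠ 0)) (decide (c ≠ 0)) = some (q', d₁, d₂))
    (ha : (a' : ℤ) = a + d₁) (hc : (c' : ℤ) = c + d₂) : M.Move (q, a, c) (q', a', c') := by
  intro t
  refine (next_eq_some_iff M).2 ⟨q', d₁, d₂, h, ?_⟩
  simp only [← ha, ← hc, Int.toNat_natCast]

lemma reaches_of_forall_lt {f : ℕ → ℕ × ℕ × ℕ} {n : ℕ}
    (h : ∀ i < n, M.Reaches (f i) (f (i + 1))) : M.Reaches (f 0) (f n) := by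
  induction n with
  | zero => exact .refl
  | succ n ih => exact (ih fun i hi => h i (by omega)).trans (h n (by omega))

lemma reaches_transfer {q : ℕ} (h : ∀ a c, M.Reaches (q, a, c + 1) (q, a + 1, c)) (a c : ℕ) :
    M.Reaches (q, a, c) (q, a + c, 0) := by
  induction c generalizing a with
  | zero => exact .refl
  | succ c ih =>
    have hrest := ih (a + 1)
    rw [add_right_comm, add_assoc] at hrest
    exact (h a c).trans hrest

end TCM

/-- Transitions of a gadget with states `0, …, k` that multiplies the first counter by `k`, using
the second one, and leaves in state `k + 1`. The first `k` states form a cycle that decrements the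
first counter and adds `k` to the second; state `k` moves the result back. -/
def mulRow (k j : ℕ) (b₁ b₂ : Bool) : ℕ × ℤ × ℤ :=
  if j < k then
    if j = 0 ∧ b₁ = false then (k, 0, 0) else ((j + 1) % k, if j = 0 then -1 else 0, 1)
  else if b₂ then (k, 1, -1) else (k + 1, 0, 0)

/-- Transitions of a gadget with states `0, …, 2 * k` that divides the first counter by `k` and
leaves in state `yes` if `k` divides it, and leaves in state `no` with unchanged counter otherwise.
The first `k` states move the first counter to the second and compute the residue; the next `k`
states form a cycle that subtracts `k` from the second counter and increments the first; state
`2 * k` moves the counter back. -/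
def divRow (k yes no j : ℕ) (b₁ b₂ : Bool) : ℕ × ℤ × ℤ :=
  if j < k then
    if b₁ then ((j + 1) % k, -1, 1) else if j = 0 then (k, 0, 0) else (2 * k, 0, 0)
  else if j < 2 * k then
    if j = k ∧ b₂ = false then (yes, 0, 0) else (k + (j + 1) % k, if j = k then 1 else 0, -1)
  else if b₂ then (2 * k, 1, -1) else (no, 0, 0)

section Gadgets

variable {M : TCM} {k q yes no : ℕ}

lemma reaches_mulRow_cycle (hk : 0 < k) (h : M.HasRows q (k + 1) (mulRow k)) (a c : ℕ) :
    M.Reaches (q, a + 1, c) (q, a, c + k) := by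
  have hchain : ∀ i < k, M.Reaches (q + i % k, a + (1 - i), c + i)
      (q + (i + 1) % k, a + (1 - (i + 1)), c + (i + 1)) := fun i hi => by
    have hstep := h i (by omega) (decide (a + (1 - i) ≠ 0)) (decide (c + i ≠ 0))
    have hrow : mulRow k i (decide (a + (1 - i) ≠ 0)) (decide (c + i ≠ 0)) =
        ((i + 1) % k, if i = 0 then -1 else 0, 1) := by
      rw [mulRow, if_pos hi, if_neg]
      simp +contextual
    rw [hrow] at hstep
    rw [Nat.mod_eq_of_lt hi]
    exact .single (TCM.move_of_step hstep (by split_ifs <;> omega) (by push_cast; ring))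
  have hround := TCM.reaches_of_forall_lt hchain
  rwa [Nat.zero_mod, Nat.mod_self, Nat.sub_eq_zero_of_le hk] at hround

lemma reaches_mulRow (hk : 0 < k) (h : M.HasRows q (k + 1) (mulRow k)) (a : ℕ) :
    M.Reaches (q, a, 0) (q + (k + 1), k * a, 0) := by
  have hmul : ∀ i < a, M.Reaches (q, a - i, k * i) (q, a - (i + 1), k * (i + 1)) := fun i hi => by
    have hround := reaches_mulRow_cycle hk h (a - (i + 1)) (k * i)
    rwa [show a - (i + 1) + 1 = a - i by omega] at hround
  have hturn : M.Move (q, 0, k * a) (q + k, 0, k * a) :=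
    TCM.move_of_step (d₁ := 0) (d₂ := 0) (by simpa [mulRow, hk] using h 0 k.succ_pos false _)
      (by simp) (by simp)
  have hback := TCM.reaches_transfer (M := M) (q := q + k) (fun a c => .single <|
    TCM.move_of_step (d₁ := 1) (d₂ := -1) (by simp [h k k.lt_succ_self, mulRow]) (by simp)
    (by simp))
    0 (k * a)
  have hexit : M.Move (q + k, 0 + k * a, 0) (q + (k + 1), k * a, 0) :=
    TCM.move_of_step (d₁ := 0) (d₂ := 0) (by simp [h k k.lt_succ_self, mulRow]) (by simp) (by simp)
  have hrun := TCM.reaches_of_forall_lt hmul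
  rw [Nat.sub_self] at hrun
  exact ((hrun.tail hturn).trans hback).tail hexit

lemma reaches_divRow_countdown (hk : 0 < k) (h : M.HasRows q (2 * k + 1) (divRow k yes no))
    (a : ℕ) : M.Reaches (q, a, 0) (q + a % k, 0, a) := by
  have hchain : ∀ i < a, M.Reaches (q + i % k, a - i, i)
      (q + (i + 1) % k, a - (i + 1), i + 1) := fun i hi => by
    have hmod : i % k < k := Nat.mod_lt i hk
    refine .single (TCM.move_of_step (d₁ := -1) (d₂ := 1) ?_ (by omega) (by simp))
    rw [h _ (by omega), divRow, if_pos hmod, if_pos (by simp; omega), Nat.mod_add_mod]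
  have hrun := TCM.reaches_of_forall_lt hchain
  rwa [Nat.zero_mod, Nat.sub_self] at hrun

lemma reaches_divRow_cycle (hk : 0 < k) (h : M.HasRows q (2 * k + 1) (divRow k yes no))
    (d c : ℕ) : M.Reaches (q + k, d, c + k) (q + k, d + 1, c) := by
  have hchain : ∀ i < k, M.Reaches (q + k + i % k, d + min i 1, c + k - i)
      (q + k + (i + 1) % k, d + min (i + 1) 1, c + k - (i + 1)) := fun i hi => by
    refine .single (TCM.move_of_step (d₁ := if k + i = k then 1 else 0) (d₂ := -1) ?_
      (by split_ifs <;> omega) (by omega))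
    rw [Nat.mod_eq_of_lt hi, add_assoc q, h _ (by omega), divRow, if_neg (by omega),
      if_pos (by omega), if_neg (by simp; omega), add_assoc k, Nat.add_mod_left, add_assoc q]
  have hround := TCM.reaches_of_forall_lt hchain
  rwa [Nat.zero_mod, Nat.mod_self, Nat.zero_min, Nat.min_eq_right hk, Nat.sub_zero,
    Nat.add_sub_cancel] at hround

lemma reaches_divRow_of_dvd (hk : 0 < k) (h : M.HasRows q (2 * k + 1) (divRow k yes no))
    (b : ℕ) : M.Reaches (q, k * b, 0) (q + yes, b, 0) := by
  have hcount := reaches_divRow_countdown hk h (k * b)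
  rw [Nat.mul_mod_right] at hcount
  have hturn : M.Move (q, 0, k * b) (q + k, 0, k * b) :=
    TCM.move_of_step (d₁ := 0) (d₂ := 0) (by simpa [divRow, hk] using h 0 (by omega) false _)
      (by simp) (by simp)
  have hdiv : ∀ i < b, M.Reaches (q + k, i, k * (b - i)) (q + k, i + 1, k * (b - (i + 1))) :=
    fun i hi => by
      rw [show b - i = b - (i + 1) + 1 by omega, Nat.mul_succ]
      exact reaches_divRow_cycle hk h i _
  have hexit : M.Move (q + k, b, k * (b - b)) (q + yes, b, 0) :=
    TCM.move_of_step (d₁ := 0) (d₂ := 0) (by simp [h k (by omega), divRow, hk])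
      (by simp) (by simp)
  exact ((hcount.tail hturn).trans (TCM.reaches_of_forall_lt hdiv)).tail hexit

lemma reaches_divRow_of_not_dvd (hk : 0 < k) (h : M.HasRows q (2 * k + 1) (divRow k yes no))
    {a : ℕ} (ha : ¬ k ∣ a) : M.Reaches (q, a, 0) (q + no, a, 0) := by
  have hmod : a % k < k := Nat.mod_lt a hk
  have hturn : M.Move (q + a % k, 0, a) (q + 2 * k, 0, a) :=
    TCM.move_of_step (d₁ := 0) (d₂ := 0)
      (by simp [h (a % k) (by omega), divRow, hmod, mt Nat.dvd_of_mod_eq_zero ha])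
      (by simp) (by simp)
  have hrow : ∀ b₁ b₂, M.step (q + 2 * k) b₁ b₂ =
      some (if b₂ then (q + 2 * k, 1, -1) else (q + no, 0, 0)) := fun b₁ b₂ => by
    rw [h _ (by omega), divRow, if_neg (by omega), if_neg (by omega)]
    cases b₂ <;> rfl
  have hback := TCM.reaches_transfer (M := M) (q := q + 2 * k) (fun a c => .single <|
    TCM.move_of_step (d₁ := 1) (d₂ := -1) (by simp [hrow]) (by simp) (by simp)) 0 a
  have hexit : M.Move (q + 2 * k, 0 + a, 0) (q + no, a, 0) :=
    TCM.move_of_step (d₁ := 0) (d₂ := 0) (by simp [hrow]) (by simp) (by simp)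
  exact (((reaches_divRow_countdown hk h a).tail hturn).trans hback).tail hexit

end Gadgets

namespace Prog

/-- Number of states of the compiled program. -/
def size : Prog → ℕ
  | .skip => 0
  | .inc r => prm r + 1
  | .seq P Q => P.size + Q.size
  | .loop r P => 2 * prm r + 1 + P.size + 1

/-- Rows of the transition table of the compiled program, which enters in state `0` and leaves in
state `P.size`. Registers are the exponents of the prime powers in the first counter, so
incrementing one is a multiplication, and testing and decrementing one is a division. -/
def row : Prog → ℕ → Bool → Bool → ℕ × ℤ × ℤ
  | .skip, _, _, _ => (0, 0, 0)
  | .inc r, j, b₁, b₂ => mulRow (prm r) j b₁ b₂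
  | .seq P Q, j, b₁, b₂ =>
      if j < P.size then P.row j b₁ b₂
      else (P.size + (Q.row (j - P.size) b₁ b₂).1, (Q.row (j - P.size) b₁ b₂).2)
  | .loop r P, j, b₁, b₂ =>
      let start := 2 * prm r + 1
      if j < start then divRow (prm r) start (start + P.size + 1) j b₁ b₂
      else if j < start + P.size then
        (start + (P.row (j - start) b₁ b₂).1, (P.row (j - start) b₁ b₂).2)
      else (0, 0, 0)

/-- A bound above all registers of the program. -/
def bound : Prog → ℕ
  | .skip => 0
  | .inc r => r + 1
  | .seq P Q => max P.bound Q.bound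
  | .loop r P => max (r + 1) P.bound

lemma row_bounds (P : Prog) {j : ℕ} (hj : j < P.size) (b₁ b₂ : Bool) :
    (P.row j b₁ b₂).1 ≤ P.size ∧ (P.row j b₁ b₂).2.1.natAbs ≤ 1 ∧
      (P.row j b₁ b₂).2.2.natAbs ≤ 1 := by
  induction P generalizing j with
  | skip => exact absurd hj (Nat.not_lt_zero j)
  | inc r =>
    have hmod := Nat.mod_lt (j + 1) (prm_pos r)
    simp only [row, size, mulRow] at hj ⊢
    split_ifs <;> simp <;> omega
  | seq P Q ihP ihQ =>
    simp only [row, size] at hj ⊢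
    split_ifs with hP
    · have := ihP hP
      exact ⟨by omega, this.2⟩
    · have := ihQ (j := j - P.size) (by omega)
      exact ⟨by simp only; omega, this.2⟩
  | loop r P ih =>
    have hmod := Nat.mod_lt (j + 1) (prm_pos r)
    simp only [row, size] at hj ⊢
    split_ifs with hdiv hP
    · simp only [divRow]
      split_ifs <;> simp <;> omega
    · have := ih (j := j - (2 * prm r + 1)) (by omega)
      exact ⟨by simp only; omega, this.2⟩
    · simp

end Prog

/-- The Gödel number of the registers below `B`. -/
def godel (B : ℕ) (s : ℕ → ℕ) : ℕ := ∏ i ∈ Finset.range B, prm i ^ s i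

lemma godel_add (B : ℕ) (s t : ℕ → ℕ) : godel B (s + t) = godel B s * godel B t := by
  simp only [godel, Pi.add_apply, pow_add, Finset.prod_mul_distrib]

lemma godel_single {B r : ℕ} (hr : r < B) (k : ℕ) : godel B (Pi.single r k) = prm r ^ k := by
  rw [godel, Finset.prod_eq_single_of_mem r (Finset.mem_range.2 hr), Pi.single_eq_same]
  intro i _ hi
  rw [Pi.single_eq_of_ne hi, pow_zero]

lemma godel_update_succ {B r : ℕ} (hr : r < B) (s : ℕ → ℕ) :
    godel B (Function.update s r (s r + 1)) = prm r * godel B s := by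
  have hupdate : Function.update s r (s r + 1) = Pi.single r 1 + s := by
    funext i
    rcases eq_or_ne i r with rfl | hi
    · simp [add_comm]
    · simp [hi]
  rw [hupdate, godel_add, godel_single hr, pow_one]

lemma prm_mul_godel_update_pred {B r : ℕ} (hr : r < B) {s : ℕ → ℕ} (hs : s r ≠ 0) :
    prm r * godel B (Function.update s r (s r - 1)) = godel B s := by
  rw [← godel_update_succ hr, Function.update_idem, Function.update_self,
    Nat.sub_add_cancel (Nat.pos_of_ne_zero hs), Function.update_eq_self]

lemma not_prm_dvd_godel {B r : ℕ} {s : ℕ → ℕ} (hs : s r = 0) : ¬ prm r ∣ godel B s := by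
  intro hdvd
  obtain ⟨i, -, hi⟩ := (prime_prm r).prime.exists_mem_finset_dvd hdvd
  obtain rfl : r = i := strictMono_prm.injective <|
    (Nat.prime_dvd_prime_iff_eq (prime_prm r) (prime_prm i)).1 ((prime_prm r).dvd_of_dvd_pow hi)
  rw [hs, pow_zero] at hi
  exact (prime_prm r).one_lt.ne' (Nat.dvd_one.1 hi)

section Compiled

variable {M : TCM} {P Q : Prog} {r q B : ℕ} {s s' : ℕ → ℕ}

lemma TCM.HasRows.seq_left (h : M.HasRows q (Prog.seq P Q).size (Prog.seq P Q).row) :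
    M.HasRows q P.size P.row := fun j hj b₁ b₂ => by
  rw [h j (by simp only [Prog.size]; omega), Prog.row, if_pos hj]

lemma TCM.HasRows.seq_right (h : M.HasRows q (Prog.seq P Q).size (Prog.seq P Q).row) :
    M.HasRows (q + P.size) Q.size Q.row := fun j hj b₁ b₂ => by
  rw [add_assoc, h (P.size + j) (by simp only [Prog.size]; omega), Prog.row, if_neg (by omega),
    Nat.add_sub_cancel_left, add_assoc]

lemma TCM.HasRows.loop_test (h : M.HasRows q (Prog.loop r P).size (Prog.loop r P).row) :
    M.HasRows q (2 * prm r + 1) (divRow (prm r) (2 * prm r + 1) (Prog.loop r P).size) :=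
  fun j hj b₁ b₂ => by
    rw [h j (by simp only [Prog.size]; omega), Prog.row, if_pos hj, Prog.size]

lemma TCM.HasRows.loop_body (h : M.HasRows q (Prog.loop r P).size (Prog.loop r P).row) :
    M.HasRows (q + (2 * prm r + 1)) P.size P.row := fun j hj b₁ b₂ => by
  rw [add_assoc, h (2 * prm r + 1 + j) (by simp only [Prog.size]; omega), Prog.row,
    if_neg (by omega), if_pos (by omega), Nat.add_sub_cancel_left, add_assoc q]

lemma transGen_move_loop (h : M.HasRows q (Prog.loop r P).size (Prog.loop r P).row)
    (hr : r < B) (hs : s r ≠ 0)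
    (hbody : M.Reaches (q + (2 * prm r + 1), godel B (Function.update s r (s r - 1)), 0)
      (q + (2 * prm r + 1) + P.size, godel B s', 0)) :
    Relation.TransGen M.Move (q, godel B s, 0) (q, godel B s', 0) := by
  have htest := reaches_divRow_of_dvd (prm_pos r) h.loop_test
    (godel B (Function.update s r (s r - 1)))
  rw [prm_mul_godel_update_pred hr hs] at htest
  refine .tail' (htest.trans hbody) (TCM.move_of_step (d₁ := 0) (d₂ := 0) ?_ (by simp) (by simp))
  rw [add_assoc, h _ (by simp only [Prog.size]; omega), Prog.row, if_neg (by omega),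
    if_neg (by omega), add_zero]

lemma reaches_of_eval (h : Prog.Eval P s s') (hB : P.bound ≤ B)
    (hrows : M.HasRows q P.size P.row) :
    M.Reaches (q, godel B s, 0) (q + P.size, godel B s', 0) := by
  induction h generalizing q with
  | skip s => exact .refl
  | inc r s =>
    rw [godel_update_succ hB]
    exact reaches_mulRow (prm_pos r) hrows _
  | seq _ _ ihP ihQ =>
    have hboth := (ihP ((le_max_left _ _).trans hB) hrows.seq_left).trans
      (ihQ ((le_max_right _ _).trans hB) hrows.seq_right)
    rwa [add_assoc] at hboth
  | loop_zero hs =>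
    exact reaches_divRow_of_not_dvd (prm_pos _) hrows.loop_test (not_prm_dvd_godel hs)
  | loop_succ hs _ _ ihbody ihloop =>
    have hbody := ihbody ((le_max_right _ _).trans hB) hrows.loop_body
    exact (transGen_move_loop hrows ((le_max_left _ _).trans hB) hs hbody).to_reflTransGen.trans
      (ihloop hB hrows)

end Compiled

/-! ### Counter machines that search -/

namespace TCM

section Run

variable {M : TCM} {x y : ℕ × ℕ × ℕ}

lemma Reaches.exists_run (h : M.Reaches x y) {n : ℕ} (hx : M.run n = some (x.1, x.2.1, x.2.2, n)) :
    ∃ k ≥ n, M.run k = some (y.1, y.2.1, y.2.2, k) := by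
  induction h with
  | refl => exact ⟨n, le_rfl, hx⟩
  | tail _ hmove ih =>
    obtain ⟨k, hk, hrun⟩ := ih
    exact ⟨k + 1, by omega, run_succ_eq_some_iff.2 ⟨_, hrun, hmove k⟩⟩

lemma exists_run_of_transGen (h : Relation.TransGen M.Move x y) {n : ℕ}
    (hx : M.run n = some (x.1, x.2.1, x.2.2, n)) :
    ∃ k > n, M.run k = some (y.1, y.2.1, y.2.2, k) := by
  obtain ⟨z, hxz, hzy⟩ := Relation.TransGen.tail'_iff.1 h
  obtain ⟨k, hk, hrun⟩ := Reaches.exists_run hxz hx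
  exact ⟨k + 1, by omega, run_succ_eq_some_iff.2 ⟨_, hrun, hzy k⟩⟩

lemma halts_of_reaches (h : M.Reaches (0, 0, 0) y) (hy : ∀ b₁ b₂, M.step y.1 b₁ b₂ = none) :
    M.Halts := by
  obtain ⟨k, -, hrun⟩ := h.exists_run (n := 0) rfl
  exact ⟨k, _, hrun, M.next_eq_none_iff.2 (hy _ _)⟩

lemma run_eq_none_of_next_eq_none {n k : ℕ} {C : Config} (h : M.run n = some C)
    (hC : M.next C = none) (hk : n < k) : M.run k = none := by
  induction k, hk using Nat.le_induction with
  | base => rw [run, h, Option.bind_some, hC]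
  | succ k _ ih => rw [run, ih, Option.bind_none]

lemma not_halts_of_transGen {f : ℕ → ℕ × ℕ × ℕ} (h₀ : M.Reaches (0, 0, 0) (f 0))
    (h : ∀ t, Relation.TransGen M.Move (f t) (f (t + 1))) : ¬ M.Halts := by
  rintro ⟨n, C, hrun, hC⟩
  have hlong (t : ℕ) : ∃ k ≥ t, M.run k = some ((f t).1, (f t).2.1, (f t).2.2, k) := by
    induction t with
    | zero => exact h₀.exists_run rfl
    | succ t ih =>
      obtain ⟨k, hk, hrun⟩ := ih
      obtain ⟨k', hk', hrun'⟩ := exists_run_of_transGen (h t) hrun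
      exact ⟨k', by omega, hrun'⟩
  obtain ⟨k, hk, hrun'⟩ := hlong (n + 1)
  rw [run_eq_none_of_next_eq_none hrun hC (by omega)] at hrun'
  exact Option.some_ne_none _ hrun'.symm

end Run

/-- The transition table whose rows for the states below `m` are given by `row`. -/
def rowTable (m : ℕ) (row : ℕ → Bool → Bool → ℕ × ℤ × ℤ) :
    List ((ℕ × Bool × Bool) × (ℕ × ℤ × ℤ)) :=
  (List.range m).flatMap fun j =>
    [(false, false), (false, true), (true, false), (true, true)].map fun b =>
      ((j, b), row j b.1 b.2)

section RowTable

variable {m : ℕ} {row : ℕ → Bool → Bool → ℕ × ℤ × ℤ}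

lemma mem_rowTable_iff {e : (ℕ × Bool × Bool) × (ℕ × ℤ × ℤ)} :
    e ∈ rowTable m row ↔ e.1.1 < m ∧ row e.1.1 e.1.2.1 e.1.2.2 = e.2 := by
  obtain ⟨⟨q, b₁, b₂⟩, v⟩ := e
  cases b₁ <;> cases b₂ <;> simp [rowTable, eq_comm]

lemma nodup_keys_rowTable : ((rowTable m row).map Prod.fst).Nodup := by
  have hkeys : (rowTable m row).map Prod.fst =
      List.range m ×ˢ [(false, false), (false, true), (true, false), (true, true)] := by
    simp only [rowTable, List.map_flatMap, List.map_map]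
    rfl
  rw [hkeys]
  exact List.nodup_range.product (by decide)

end RowTable

lemma step_eq_some_of_mem {M : TCM} {q : ℕ} {b₁ b₂ : Bool} {v : ℕ × ℤ × ℤ}
    (h : ((q, b₁, b₂), v) ∈ M.δ) : M.step q b₁ b₂ = some v := by
  obtain ⟨e, he⟩ := Option.isSome_iff_exists.1 <|
    List.find?_isSome (p := fun e => decide (e.1 = (q, b₁, b₂))).2 ⟨_, h, decide_eq_true rfl⟩
  have hkey : e.1 = (q, b₁, b₂) := by
    simpa only [decide_eq_true_eq] using List.find?_some he
  rw [step, he, List.inj_on_of_nodup_map M.keys_nodup (List.mem_of_find?_eq_some he) h hkey,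
    Option.map_some]

lemma step_eq_none {M : TCM} {q : ℕ} (h : ∀ e ∈ M.δ, e.1.1 ≠ q) (b₁ b₂ : Bool) :
    M.step q b₁ b₂ = none := by
  rw [step, Option.map_eq_none_iff, List.find?_eq_none]
  exact fun e he hkey => h e he (congrArg Prod.fst (of_decide_eq_true hkey))

/-- Rows of the machine that increments its first counter `N` times and then runs the compiled
program `P`. -/
def inputRow (P : Prog) (N j : ℕ) (b₁ b₂ : Bool) : ℕ × ℤ × ℤ :=
  if j < N then (j + 1, 1, 0) else (N + (P.row (j - N) b₁ b₂).1, (P.row (j - N) b₁ b₂).2)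

lemma rowTable_inputRow (P : Prog) (N : ℕ) : rowTable (N + P.size) (inputRow P N) =
    (rowTable N fun j _ _ => (j + 1, 1, 0)) ++ (rowTable P.size P.row).map fun e =>
      ((N + e.1.1, e.1.2), (N + e.2.1, e.2.2)) := by
  rw [rowTable, List.range_add, List.flatMap_append, List.flatMap_map, rowTable, rowTable,
    List.map_flatMap]
  congr 1
  · refine List.flatMap_congr fun j hj => ?_
    simp [inputRow, List.mem_range.1 hj]
  · simp [inputRow]

/-- The machine that increments its first counter `N` times and then runs the compiled program `P`.
It halts in its last state, which has no rows. -/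
def ofProg (P : Prog) (N : ℕ) : TCM where
  m := N + P.size + 1
  hm := Nat.succ_pos _
  δ := rowTable (N + P.size) (inputRow P N)
  keys_nodup := nodup_keys_rowTable
  wf e he := by
    obtain ⟨hlt, hrow⟩ := mem_rowTable_iff.1 he
    rw [← hrow, inputRow]
    split_ifs with hN
    · simp only [Int.natAbs_one, Int.natAbs_zero]
      omega
    · have := P.row_bounds (j := e.1.1 - N) (by omega) e.1.2.1 e.1.2.2
      exact ⟨by omega, by simp only; omega, this.2⟩

section OfProg

variable (P : Prog) (N : ℕ)

lemma step_ofProg {j : ℕ} (hj : j < N + P.size) (b₁ b₂ : Bool) :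
    (ofProg P N).step j b₁ b₂ = some (inputRow P N j b₁ b₂) :=
  step_eq_some_of_mem (mem_rowTable_iff.2 ⟨hj, rfl⟩)

lemma hasRows_ofProg : (ofProg P N).HasRows N P.size P.row := fun j hj b₁ b₂ => by
  rw [step_ofProg P N (by omega), inputRow, if_neg (by omega), Nat.add_sub_cancel_left]

lemma reaches_ofProg : (ofProg P N).Reaches (0, 0, 0) (N, N, 0) := by
  refine reaches_of_forall_lt (f := fun i => (i, i, 0)) fun i hi =>
    .single (move_of_step (d₁ := 1) (d₂ := 0) ?_ (by simp) (by simp))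
  rw [step_ofProg P N (by omega), inputRow, if_pos hi]

lemma step_ofProg_last (b₁ b₂ : Bool) : (ofProg P N).step (N + P.size) b₁ b₂ = none :=
  step_eq_none (fun _ he => (mem_rowTable_iff.1 he).1.ne) b₁ b₂

end OfProg

end TCM

/-- Register contents during the search: the input `n`, the candidate `t` and the flag `f`, which
vanishes once a candidate has been accepted. -/
def searchRegs (n t f : ℕ) : ℕ → ℕ := Pi.single 0 n + Pi.single 1 t + Pi.single 2 f

lemma godel_searchRegs {B : ℕ} (hB : 3 ≤ B) (n t f : ℕ) :
    godel B (searchRegs n t f) = prm 0 ^ n * prm 1 ^ t * prm 2 ^ f := by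
  rw [searchRegs, godel_add, godel_add, godel_single (by omega), godel_single (by omega),
    godel_single (by omega)]

lemma update_flag_searchRegs (n t f f' : ℕ) :
    Function.update (searchRegs n t f) 2 f' = searchRegs n t f' := by
  funext r
  simp only [searchRegs, Function.update_apply, Pi.add_apply, Pi.single_apply]
  grind

lemma update_candidate_searchRegs (n t f t' : ℕ) :
    Function.update (searchRegs n t f) 1 t' = searchRegs n t' f := by
  funext r
  simp only [searchRegs, Function.update_apply, Pi.add_apply, Pi.single_apply]
  grind

lemma exists_eval_searchRegs {T : ℕ → ℕ → ℕ} (hT : Primrec₂ T) : ∃ P : Prog, ∀ n t f,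
    Prog.Eval P (searchRegs n t f) (searchRegs n (t + 1) (T n t)) := by
  obtain ⟨P, hP⟩ := Prog.computable_of_primrec' (Nat.Primrec'.prim_iff₂.2 hT) ![0, 1] 2 3
    (by simp [Fin.forall_fin_two]) (by omega) (by simp [Fin.forall_fin_two])
  refine ⟨.seq (.loop 2 .skip) (.seq P (.inc 1)), fun n t f => ?_⟩
  have hclear := Prog.eval_clear 2 (searchRegs n t f)
  have hrun := hP (searchRegs n t 0) (by simp [searchRegs]) fun r hr => by
    simp [searchRegs, show r ≠ 0 by omega, show r ≠ 1 by omega]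
  have hinc := Prog.Eval.inc 1 (searchRegs n t (T n t))
  rw [update_flag_searchRegs] at hclear hrun
  rw [update_candidate_searchRegs] at hinc
  refine hclear.seq ((hrun.cast rfl ?_).seq (hinc.cast rfl ?_))
  · simp [searchRegs]
  · simp [searchRegs]

lemma searchRegs_flag (n t f : ℕ) : searchRegs n t f 2 = f := by
  simp [searchRegs]

lemma exists_eval_loop_of_eq_zero {P : Prog} {T : ℕ → ℕ → ℕ} {n k : ℕ}
    (hP : ∀ t f, Prog.Eval P (searchRegs n t f) (searchRegs n (t + 1) (T n t))) {t : ℕ}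
    (hk : T n (t + k) = 0) (f : ℕ) : ∃ s, Prog.Eval (.loop 2 P) (searchRegs n t f) s := by
  induction k generalizing t f with
  | zero =>
    rcases eq_or_ne f 0 with rfl | hf
    · exact ⟨_, .loop_zero (searchRegs_flag n t 0)⟩
    refine ⟨_, .loop_succ (by rwa [searchRegs_flag]) ((hP t (f - 1)).cast ?_ rfl)
      (.loop_zero ((searchRegs_flag n (t + 1) (T n t)).trans hk))⟩
    rw [update_flag_searchRegs, searchRegs_flag]
  | succ k ih =>
    rcases eq_or_ne f 0 with rfl | hf
    · exact ⟨_, .loop_zero (searchRegs_flag n t 0)⟩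
    obtain ⟨s, hs⟩ := ih (t := t + 1) (by rwa [add_right_comm]) (T n t)
    refine ⟨s, .loop_succ (by rwa [searchRegs_flag]) ((hP t (f - 1)).cast ?_ rfl) hs⟩
    rw [update_flag_searchRegs, searchRegs_flag]

lemma exists_halts_ofProg_iff {T : ℕ → ℕ → ℕ} (hT : Primrec₂ T) :
    ∃ P : Prog, ∀ n, (TCM.ofProg P (prm 0 ^ n * prm 2)).Halts ↔ ∃ t, T n t = 0 := by
  obtain ⟨P, hP⟩ := exists_eval_searchRegs hT
  refine ⟨.loop 2 P, fun n => ?_⟩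
  set Q : Prog := .loop 2 P
  set M := TCM.ofProg Q (prm 0 ^ n * prm 2)
  have hrows : M.HasRows _ Q.size Q.row := TCM.hasRows_ofProg Q _
  have hinput : M.Reaches (0, 0, 0) (prm 0 ^ n * prm 2, godel Q.bound (searchRegs n 0 1), 0) := by
    rw [godel_searchRegs (B := Q.bound) (le_max_left 3 _), pow_zero, mul_one, pow_one]
    exact TCM.reaches_ofProg Q _
  constructor
  · contrapose!
    intro hne
    have hround (t f : ℕ) (hf : f ≠ 0) : Relation.TransGen M.Move
        (prm 0 ^ n * prm 2, godel Q.bound (searchRegs n t f), 0)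
        (prm 0 ^ n * prm 2, godel Q.bound (searchRegs n (t + 1) (T n t)), 0) := by
      refine transGen_move_loop hrows (le_max_left 3 _) (by rwa [searchRegs_flag])
        (reaches_of_eval ?_ (le_max_right _ _) hrows.loop_body)
      rw [update_flag_searchRegs]
      exact hP n t _
    refine TCM.not_halts_of_transGen (f := fun t =>
      (_, godel Q.bound (searchRegs n t (t.casesOn 1 (T n))), 0)) hinput fun t => hround t _ ?_
    cases t
    exacts [one_ne_zero, hne _]
  · rintro ⟨t, ht⟩
    obtain ⟨s, hs⟩ := exists_eval_loop_of_eq_zero (hP n) (t := 0) (by rwa [zero_add]) 1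
    exact TCM.halts_of_reaches (hinput.trans (reaches_of_eval hs le_rfl hrows))
      (TCM.step_ofProg_last Q _)

/-! ### Undecidability -/

lemma primrec_const_pow (a : ℕ) : Primrec fun n : ℕ => a ^ n := by
  have hiterate : Primrec fun n : ℕ => (n.rec 1 fun _ y => y * a : ℕ) :=
    Primrec.nat_rec₁ 1 (Primrec.nat_mul.comp Primrec.snd (Primrec.const a))
  refine hiterate.of_eq fun n => ?_
  induction n with
  | zero => rfl
  | succ n ih => rw [pow_succ, ← ih]

lemma primrec_encodeTCM_ofProg (P : Prog) : Primrec fun N => encodeTCM (TCM.ofProg P N) := by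
  have hstates : Primrec fun N : ℕ => N + P.size + 1 :=
    Primrec.succ.comp (Primrec.nat_add.comp .id (.const P.size))
  have hinput : Primrec fun N : ℕ => TCM.rowTable N fun j _ _ => (j + 1, 1, 0) :=
    Primrec.list_flatMap Primrec.list_range <| Primrec.list_map (.const _) <|
      Primrec.pair (.pair (Primrec.snd.comp .fst) .snd)
        (.pair (Primrec.succ.comp (Primrec.snd.comp .fst)) (.const (1, 0)))
  have hprog : Primrec fun N : ℕ => (TCM.rowTable P.size P.row).map fun e =>
      ((N + e.1.1, e.1.2), (N + e.2.1, e.2.2)) :=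
    Primrec.list_map (.const _) <|
      Primrec.pair (.pair (Primrec.nat_add.comp .fst (Primrec.fst.comp (Primrec.fst.comp .snd)))
          (Primrec.snd.comp (Primrec.fst.comp .snd)))
        (.pair (Primrec.nat_add.comp .fst (Primrec.fst.comp (Primrec.snd.comp .snd)))
          (Primrec.snd.comp (Primrec.snd.comp .snd)))
  refine (Primrec.encode.comp (hstates.pair (Primrec.list_append.comp hinput hprog))).of_eq
    fun N => ?_
  rw [← TCM.rowTable_inputRow]
  rfl

/-- `0` if the code with number `c` halts on input `0` within the bound `t`, and `1` otherwise. -/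
def haltFlag (c t : ℕ) : ℕ :=
  1 - Encodable.encode (Nat.Partrec.Code.evaln t (Denumerable.ofNat Nat.Partrec.Code c) 0)

lemma primrec_haltFlag : Primrec₂ haltFlag := by
  have hrun : Primrec₂ fun c t : ℕ =>
      Nat.Partrec.Code.evaln t (Denumerable.ofNat Nat.Partrec.Code c) 0 :=
    Nat.Partrec.Code.primrec_evaln.comp
      (.pair (.pair .snd ((Primrec.ofNat _).comp .fst)) (.const 0))
  exact Primrec.nat_sub.comp (.const 1) (Primrec.encode.comp hrun)

lemma exists_haltFlag_eq_zero_iff (c : Nat.Partrec.Code) :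
    (∃ t, haltFlag (Encodable.encode c) t = 0) ↔ (c.eval 0).Dom := by
  have hflag (t : ℕ) : haltFlag (Encodable.encode c) t = 0 ↔ ∃ x, x ∈ c.evaln t 0 := by
    rw [haltFlag, Denumerable.ofNat_encode]
    cases c.evaln t 0 <;> simp
  simp only [hflag, Part.dom_iff_mem, Nat.Partrec.Code.evaln_complete]
  exact exists_comm

theorem not_computable_halts :
    ¬ ∃ f : ℕ → Bool, Computable f ∧ ∀ M : TCM, (f (encodeTCM M) = true ↔ M.Halts) := by
  rintro ⟨f, hf, hM⟩
  obtain ⟨P, hP⟩ := exists_halts_ofProg_iff primrec_haltFlag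
  have hinput : Primrec fun n : ℕ => prm 0 ^ n * prm 2 :=
    Primrec.nat_mul.comp (primrec_const_pow _) (.const _)
  have hdecide : Computable fun c : Nat.Partrec.Code =>
      f (encodeTCM (TCM.ofProg P (prm 0 ^ Encodable.encode c * prm 2))) :=
    hf.comp ((primrec_encodeTCM_ofProg P).comp (hinput.comp .encode)).to_comp
  refine ComputablePred.halting_problem 0 (ComputablePred.computable_iff.2 ⟨_, hdecide, ?_⟩)
  funext c
  rw [hM, hP, exists_haltFlag_eq_zero_iff]

/-- bts membership is undecidable within the class `C = {R_M}`. -/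
theorem stmt_11 :
    ¬ ∃ f : ℕ → Bool, Computable f ∧
      ∀ M : TCM, (f (encodeTCM M) = true ↔ IsBts (RM M)) := by
  rintro ⟨f, hf, hM⟩
  exact not_computable_halts ⟨f, hf, fun M => (hM M).trans (isBts_RM_iff_halts M)⟩

end
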